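/- Let G be a countable discrete amenable group acting continuously on a compact metric space (X,d), let μ be a G-invariant, G-ergodic Borel probability measure on X, and let {F_n} be a tempered Følner sequence in G with lim_{n→∞} |F_n|/log n = ∞. Then for μ-almost every x ∈ X, lim_{δ→0} liminf_{n→∞} −(1/|F_n|) log μ(B_{F_n}(x,δ)) ≥ h_μ(X,G). -/

import Mathlib

open Filter Set MeasureTheory Topology ENNReal Pointwise

variable {G X : Type*}

section Defs

variable [Group G] [MetricSpace X] [MulAction G X]

/-- The Bowen ball `B_F(x,ε) = {y : d(gx,gy) < ε for all g ∈ F}`. -/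
def bowenBall (F : Finset G) (x : X) (ε : ℝ) : Set X :=
  {y : X | ∀ g ∈ F, dist (g • x) (g • y) < ε}

/-- A Følner sequence: `|F_n ∆ gF_n|/|F_n| → 0` for every `g ∈ G`. -/
def IsFolnerSeq (F : ℕ → Finset G) : Prop :=
  ∀ g : G, Tendsto
    (fun n => ((symmDiff (F n : Set G) ((g * ·) '' (F n : Set G))).ncard : ℝ) / (F n).card)
    atTop (𝓝 0)

/-- A tempered sequence: `|⋃_{k<n} F_k⁻¹ F_n| ≤ C |F_n|` for all `n`. -/
def IsTemperedSeq (F : ℕ → Finset G) : Prop :=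
  ∃ C : ℝ, 0 < C ∧ ∀ n : ℕ,
    ((⋃ k ∈ Finset.range n, ((F k : Set G)⁻¹ * (F n : Set G))).ncard : ℝ) ≤ C * (F n).card

/-- The growth condition `lim_n |F_n| / log n = ∞`. -/
def GrowthCond (F : ℕ → Finset G) : Prop :=
  Tendsto (fun n : ℕ => ((F n).card : ℝ) / Real.log n) atTop atTop

/-- `M(Z,N,ε,s,{F_n})`: infimum of `∑ exp(-s |F_{n_i}|)` over countable families of Bowen
balls `B_{F_{n_i}}(x_i,ε)`, `n_i ≥ N`, covering `Z`. -/
noncomputable def ballM (F : ℕ → Finset G) (Z : Set X) (N : ℕ) (ε s : ℝ) : ℝ≥0∞ :=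
  ⨅ (I : Set (X × ℕ)) (_ : I.Countable) (_ : ∀ p ∈ I, N ≤ p.2)
    (_ : Z ⊆ ⋃ p ∈ I, bowenBall (F p.2) p.1 ε),
    ∑' p : I, ENNReal.ofReal (Real.exp (-s * ((F (p : X × ℕ).2).card : ℝ)))

/-- `M(Z,ε,s,{F_n}) = lim_{N→∞} M(Z,N,ε,s,{F_n})` (the quantity is nondecreasing in `N`). -/
noncomputable def ballMN (F : ℕ → Finset G) (Z : Set X) (ε s : ℝ) : ℝ≥0∞ :=
  ⨆ N : ℕ, ballM F Z N ε s

/-- `M(Z,s,{F_n}) = lim_{ε→0} M(Z,ε,s,{F_n})` (the quantity is nondecreasing as `ε` decreases). -/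
noncomputable def ballMtot (F : ℕ → Finset G) (Z : Set X) (s : ℝ) : ℝ≥0∞ :=
  ⨆ (ε : ℝ) (_ : 0 < ε), ballMN F Z ε s

/-- The Bowen topological entropy of `Z` along `{F_n}`: the critical value of `s` at which
`M(Z,s,{F_n})` jumps from `+∞` to `0`, i.e. `inf {s : M(Z,s,{F_n}) = 0}`. -/
noncomputable def bowenEnt (F : ℕ → Finset G) (Z : Set X) : ℝ≥0∞ :=
  ⨅ (s : ℝ) (_ : ballMtot F Z s = 0), ENNReal.ofReal s

/-- The weighted quantity `W(f,N,ε,s,{F_n})`. -/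
noncomputable def wtW (F : ℕ → Finset G) (f : X → ℝ≥0∞) (N : ℕ) (ε s : ℝ) : ℝ≥0∞ :=
  ⨅ (I : Set (X × ℕ)) (c : X × ℕ → ℝ≥0∞) (_ : I.Countable)
    (_ : ∀ p ∈ I, N ≤ p.2 ∧ 0 < c p ∧ c p < ⊤)
    (_ : ∀ x : X, f x ≤ ∑' p : I, c (p : X × ℕ) *
        (bowenBall (F (p : X × ℕ).2) (p : X × ℕ).1 ε).indicator (fun _ => (1 : ℝ≥0∞)) x),
    ∑' p : I, c (p : X × ℕ) * ENNReal.ofReal (Real.exp (-s * ((F (p : X × ℕ).2).card : ℝ)))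

/-- `W(Z,N,ε,s,{F_n}) = W(χ_Z,N,ε,s,{F_n})`. -/
noncomputable def wtWset (F : ℕ → Finset G) (Z : Set X) (N : ℕ) (ε s : ℝ) : ℝ≥0∞ :=
  wtW F (Z.indicator fun _ => (1 : ℝ≥0∞)) N ε s

/-- `W(Z,ε,s,{F_n}) = lim_{N→∞} W(Z,N,ε,s,{F_n})`. -/
noncomputable def wtWN (F : ℕ → Finset G) (Z : Set X) (ε s : ℝ) : ℝ≥0∞ :=
  ⨆ N : ℕ, wtWset F Z N ε s

/-- `W(Z,s,{F_n}) = lim_{ε→0} W(Z,ε,s,{F_n})`. -/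
noncomputable def wtWtot (F : ℕ → Finset G) (Z : Set X) (s : ℝ) : ℝ≥0∞ :=
  ⨆ (ε : ℝ) (_ : 0 < ε), wtWN F Z ε s

/-- The weighted Bowen topological entropy of `Z` along `{F_n}`. -/
noncomputable def wtBowenEnt (F : ℕ → Finset G) (Z : Set X) : ℝ≥0∞ :=
  ⨅ (s : ℝ) (_ : wtWtot F Z s = 0), ENNReal.ofReal s

/-- A finite open cover of `X`. -/
def IsFinOpenCover (𝒰 : Finset (Set X)) : Prop :=
  (∀ U ∈ 𝒰, IsOpen U) ∧ ⋃₀ (𝒰 : Set (Set X)) = Set.univ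

/-- `N(⋁_{g∈F} g⁻¹𝒰)`: the minimal cardinality of a subcover of the refined cover, whose members
are the sets `X(𝐔) = ⋂_{g∈F} g⁻¹ U_g` with `U_g ∈ 𝒰`. -/
noncomputable def coverNum (𝒰 : Finset (Set X)) (F : Finset G) : ℕ :=
  sInf {k : ℕ | ∃ Λ : Finset (G → Set X), Λ.card = k ∧
    (∀ u ∈ Λ, ∀ g ∈ F, u g ∈ 𝒰) ∧
    (⋃ u ∈ Λ, ⋂ g ∈ F, (fun y => g • y) ⁻¹' u g) = Set.univ}

/-- `h_top(G,𝒰) = lim_n (1/|F_n|) log N(⋁_{g∈F_n} g⁻¹𝒰)` (the limit exists by Ornstein–Weiss,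
hence equals the `limsup`). -/
noncomputable def coverTopEnt (F : ℕ → Finset G) (𝒰 : Finset (Set X)) : ℝ :=
  limsup (fun n => Real.log (coverNum 𝒰 (F n)) / (F n).card) atTop

/-- The topological entropy `h_top(X,G)`, the supremum over finite open covers. -/
noncomputable def topEnt (X : Type*) [MetricSpace X] [MulAction G X] (F : ℕ → Finset G) : ℝ≥0∞ :=
  ⨆ (𝒰 : Finset (Set X)) (_ : IsFinOpenCover 𝒰), ENNReal.ofReal (coverTopEnt F 𝒰)

/-- `M(Z,𝒰,N,s,{F_n})`: infimum of `∑_{𝐔∈Λ} exp(-s m(𝐔))` over collections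
`Λ ⊆ ⋃_{j≥N} 𝒲_{F_j}(𝒰)` covering `Z`; an element `𝐔 ∈ 𝒲_{F_j}(𝒰)` is encoded as a pair
`(j, u)` with `u g ∈ 𝒰` for `g ∈ F_j` (and `u g = ∅` elsewhere), `X(𝐔) = ⋂_{g∈F_j} g⁻¹ (u g)`
and `m(𝐔) = |F_j|`. -/
noncomputable def covM (F : ℕ → Finset G) (𝒰 : Finset (Set X)) (Z : Set X) (N : ℕ) (s : ℝ) :
    ℝ≥0∞ :=
  ⨅ (Λ : Set (ℕ × (G → Set X)))
    (_ : ∀ p ∈ Λ, N ≤ p.1 ∧ (∀ g ∈ F p.1, p.2 g ∈ 𝒰) ∧ (∀ g ∉ F p.1, p.2 g = ∅))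
    (_ : Z ⊆ ⋃ p ∈ Λ, ⋂ g ∈ F p.1, (fun y => g • y) ⁻¹' p.2 g),
    ∑' p : Λ, ENNReal.ofReal (Real.exp (-s * ((F (p : ℕ × (G → Set X)).1).card : ℝ)))

/-- `M(Z,𝒰,s,{F_n}) = lim_{N→∞} M(Z,𝒰,N,s,{F_n})`. -/
noncomputable def covMtot (F : ℕ → Finset G) (𝒰 : Finset (Set X)) (Z : Set X) (s : ℝ) : ℝ≥0∞ :=
  ⨆ N : ℕ, covM F 𝒰 Z N s

/-- The cover-based Bowen topological entropy `h^B_top(𝒰,Z,{F_n}) = inf {s : M(Z,𝒰,s,{F_n}) = 0}`. -/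
noncomputable def covBowenEnt (F : ℕ → Finset G) (𝒰 : Finset (Set X)) (Z : Set X) : ℝ≥0∞ :=
  ⨅ (s : ℝ) (_ : covMtot F 𝒰 Z s = 0), ENNReal.ofReal s

/-- `diam(𝒰) = max {diam U : U ∈ 𝒰}`. -/
noncomputable def coverDiam (𝒰 : Finset (Set X)) : ℝ≥0∞ :=
  ⨆ U ∈ 𝒰, EMetric.diam U

end Defs

section MeasureDefs

variable [Group G] [MetricSpace X] [MulAction G X] [MeasurableSpace X]

/-- The quantity `-(1/m) log μ(B)`, with value `+∞` when `μ B = 0`. -/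
noncomputable def locTerm (μ : Measure X) (B : Set X) (m : ℕ) : ℝ≥0∞ :=
  if μ B = 0 then ⊤ else ENNReal.ofReal (-(Real.log ((μ B).toReal)) / (m : ℝ))

/-- The lower local entropy `h̲_μ^{loc}(x,ε,{F_n}) = liminf_n -(1/|F_n|) log μ(B_{F_n}(x,ε))`. -/
noncomputable def lowLoc (μ : Measure X) (F : ℕ → Finset G) (x : X) (ε : ℝ) : ℝ≥0∞ :=
  liminf (fun n => locTerm μ (bowenBall (F n) x ε) (F n).card) atTop

/-- The upper local entropy `limsup_n -(1/|F_n|) log μ(B_{F_n}(x,ε))`. -/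
noncomputable def upLoc (μ : Measure X) (F : ℕ → Finset G) (x : X) (ε : ℝ) : ℝ≥0∞ :=
  limsup (fun n => locTerm μ (bowenBall (F n) x ε) (F n).card) atTop

/-- `h̲_μ^{loc}(x,{F_n}) = lim_{ε→0} h̲_μ^{loc}(x,ε,{F_n})` (a monotone limit, i.e. the
supremum over `ε > 0`). -/
noncomputable def lowLocPt (μ : Measure X) (F : ℕ → Finset G) (x : X) : ℝ≥0∞ :=
  ⨆ (ε : ℝ) (_ : 0 < ε), lowLoc μ F x ε

/-- `h̲_μ^{loc}({F_n}) = ∫_X h̲_μ^{loc}(x,{F_n}) dμ(x)`. -/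
noncomputable def lowLocEnt (μ : Measure X) (F : ℕ → Finset G) : ℝ≥0∞ :=
  ∫⁻ x, lowLocPt μ F x ∂μ

/-- A finite measurable partition of `X`, presented as `P : Fin k → Set X`. -/
def IsMeasPartition {k : ℕ} (P : Fin k → Set X) : Prop :=
  (∀ i, MeasurableSet (P i)) ∧ Pairwise (Function.onFun Disjoint P) ∧ (⋃ i, P i) = Set.univ

/-- The static entropy `H_μ(𝒫_F)` of the join `𝒫_F = ⋁_{g∈F} g⁻¹𝒫`; its atoms are the
nonempty sets `⋂_{g∈F} g⁻¹ P(u g)` (distinct choices `u` yield disjoint atoms, and empty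
atoms contribute `0`). -/
noncomputable def partH (μ : Measure X) {k : ℕ} (P : Fin k → Set X) (F : Finset G) : ℝ :=
  letI := Classical.decEq G
  ∑ u : (↥F → Fin k),
    Real.negMulLog ((μ (⋂ g : ↥F, (fun y => (g : G) • y) ⁻¹' P (u g))).toReal)

/-- `h_μ(G,𝒫) = liminf_n (1/|F_n|) H_μ(𝒫_{F_n})`. -/
noncomputable def partEnt (μ : Measure X) (F : ℕ → Finset G) {k : ℕ} (P : Fin k → Set X) : ℝ :=
  liminf (fun n => partH μ P (F n) / (F n).card) atTop

/-- The measure-theoretic entropy `h_μ(X,G) = sup_𝒫 h_μ(G,𝒫)` (it is independent of the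
Følner sequence used to compute it). -/
noncomputable def measEnt (μ : Measure X) (F : ℕ → Finset G) : ℝ≥0∞ :=
  ⨆ (k : ℕ) (P : Fin k → Set X) (_ : IsMeasPartition P), ENNReal.ofReal (partEnt μ F P)

/-- Ergodicity of the `G`-action w.r.t. `μ`. -/
def IsErgodicGAction (G : Type*) [Group G] [MulAction G X] (μ : Measure X) : Prop :=
  ∀ A : Set X, MeasurableSet A → (∀ g : G, (g • ·) ⁻¹' A = A) → μ A = 0 ∨ μ A = 1

end MeasureDefs

/-!
Fix a partition, given by a labelling `ι`, with entropy `h`, and suppose that the lower local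
entropy is below some `r < h` on a set `E` of positive measure. For `x ∈ E` infinitely many Bowen
balls over `F n` have mass at least `exp (-r |F n|)`. Disjoint balls of that size number at most
`exp (r |F n|)`, so by the Vitali and Lusin theorems a codebook of at most that many words gives the
itineraries over `F n` of the points whose ball is large, up to errors at visits to a set `bad` of
small measure.

In a large window `W = F N`, the tempered condition allows one to pack nearly disjoint tiles
`F n * c`, centred at visits to the coded points, that fill a definite proportion of `W`. The
itinerary of `x` is then described by a codeword on each tile and a correction, at cost `lam`, at
each visit to `bad`; since `|F n| / log n → ∞`, summing over the scales `n` is harmless. The rest of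
the window is coded by the geometric mean of the masses of the cylinders over the translates of a
fixed set `K`: by Finner's inequality this weight satisfies Kraft's inequality, and by the mean
ergodic theorem it spends about `h` per letter. Kraft's inequality makes points whose total code is
much shorter than their information exceptional, whereas by the Shannon–McMillan theorem, for
convergence in probability, the information is about `h |W|` for typical points, on which the tiles
save a definite proportion of this.
-/

/-! ### Cylinders and code weights -/

section Cylinders

open scoped Finset

lemma card_filter_mem_translate [Group G] [DecidableEq G] (K : Finset G) {V : Finset G} {i : G}
    (hi : i ∈ V) :
    #{c ∈ K⁻¹ * V | i ∈ (K * {c}) ∩ V} = #K := by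
  rw [← Finset.card_image_of_injective K (f := fun κ => κ⁻¹ * i)
    fun a b h => inv_injective (mul_right_cancel h)]
  congr 1
  ext c
  simp only [Finset.mem_filter, Finset.mem_inter, hi, and_true, Finset.mem_mul,
    Finset.mem_singleton, exists_eq_left, Finset.mem_image]
  constructor
  · rintro ⟨-, κ, hκ, rfl⟩
    exact ⟨κ, hκ, inv_mul_cancel_left κ c⟩
  · rintro ⟨κ, hκ, rfl⟩
    exact ⟨⟨_, Finset.inv_mem_inv hκ, i, hi, rfl⟩, κ, hκ, mul_inv_cancel_left κ i⟩

variable [Group G] [MulAction G X] {α : Type*}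

/-- The itinerary (name) of `x` under the labelling `ι`: the label of `g • x` at each `g`. A finite
measurable partition is encoded throughout as a measurable map `ι` to a finite type. -/
def itinerary (ι : X → α) (x : X) : G → α := fun g => ι (g • x)

variable [MeasurableSpace X] {ι : X → α}

/-- The mass of the cylinder of points whose itinerary agrees with `u` on `S`. -/
noncomputable def cylinderMass (μ : Measure X) (ι : X → α) (S : Finset G) (u : G → α) : ℝ≥0∞ :=
  μ {x | EqOn (itinerary ι x) u S}

lemma dependsOn_cylinderMass (μ : Measure X) (ι : X → α) (S : Finset G) :
    DependsOn (cylinderMass μ ι S) (S : Set G) := by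
  intro u v huv
  exact congrArg μ (Set.ext fun x => ⟨fun h => h.trans huv, fun h => h.trans (EqOn.symm huv)⟩)

lemma cylinderMass_empty (μ : Measure X) [IsProbabilityMeasure μ] (ι : X → α) (u : G → α) :
    cylinderMass μ ι ∅ u = 1 := by
  simp [cylinderMass]

lemma measurable_cylinderMass [MeasurableSpace α] [MeasurableSingletonClass α] [Finite α]
    (μ : Measure X) (ι : X → α) (S : Finset G) :
    Measurable (cylinderMass μ ι S) := by
  classical
  rcases isEmpty_or_nonempty (G → α) with _ | ⟨⟨u⟩⟩
  · exact measurable_of_empty _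
  have hfactor : cylinderMass μ ι S =
      (fun v => cylinderMass μ ι S (Function.updateFinset u S v)) ∘ S.restrict := by
    funext w
    exact dependsOn_cylinderMass μ ι S fun g hg => by
      simp [Function.updateFinset, Finset.mem_coe.1 hg]
  rw [hfactor]
  exact (measurable_of_countable _).comp (Finset.measurable_restrict S)

section CodeWeight

variable [DecidableEq G]

/-- The weight of `u` on the window `V`: the geometric mean of the masses of the cylinders over the
translates `K * c`, cut down to `V`. -/
noncomputable def codeWeight (μ : Measure X) (ι : X → α) (K V : Finset G) (u : G → α) : ℝ≥0∞ :=
  ∏ c ∈ K⁻¹ * V, cylinderMass μ ι ((K * {c}) ∩ V) u ^ (1 / (#K : ℝ))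

lemma dependsOn_codeWeight (μ : Measure X) (ι : X → α) (K V : Finset G) :
    DependsOn (codeWeight μ ι K V) (V : Set G) := fun u v huv =>
  Finset.prod_congr rfl fun c _ => by
    rw [dependsOn_cylinderMass μ ι _ fun g hg => huv g (Finset.mem_inter.1 hg).2]

end CodeWeight

variable [MeasurableSpace α] [MeasurableConstSMul G X]

lemma measurable_itinerary (hι : Measurable ι) :
    Measurable (itinerary ι : X → G → α) :=
  measurable_pi_lambda _ fun g => hι.comp (measurable_const_smul g)

variable [MeasurableSingletonClass α]

lemma measurableSet_itinerary_eqOn (hι : Measurable ι) (S : Finset G) (u : G → α) :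
    MeasurableSet {x | EqOn (itinerary ι x) u S} := by
  have hset : {x | EqOn (itinerary ι x) u S} =
      ⋂ g ∈ S, (fun x => itinerary ι x g) ⁻¹' {u g} := by
    ext x
    simp [EqOn]
  rw [hset]
  exact S.measurableSet_biInter fun g _ =>
    measurable_pi_iff.1 (measurable_itinerary hι) g (measurableSet_singleton _)

variable [DecidableEq G]

lemma sum_cylinderMass_update [Fintype α] (μ : Measure X) (hι : Measurable ι) {S : Finset G}
    {i : G} (hi : i ∈ S) (u : G → α) :
    ∑ a, cylinderMass μ ι S (Function.update u i a) = cylinderMass μ ι (S.erase i) u := by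
  have hdisj : Pairwise (Function.onFun Disjoint fun a =>
      {x : X | EqOn (itinerary ι x) (Function.update u i a) S}) := fun a b hab =>
    Set.disjoint_left.2 fun x hxa hxb => hab <| by
      simpa only [Function.update_self] using (hxa hi).symm.trans (hxb hi)
  have hunion : {x : X | EqOn (itinerary ι x) u (S.erase i : Finset G)} =
      ⋃ a, {x | EqOn (itinerary ι x) (Function.update u i a) S} := by
    ext x
    simp only [mem_ofPred_eq, mem_iUnion]
    refine ⟨fun h => ⟨itinerary ι x i, fun g hg => ?_⟩, fun ⟨a, h⟩ g hg => ?_⟩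
    · rcases eq_or_ne g i with rfl | hgi
      · rw [Function.update_self]
      · rw [Function.update_of_ne hgi, h (Finset.mem_erase.2 ⟨hgi, hg⟩)]
    · obtain ⟨hgi, hgS⟩ := Finset.mem_erase.1 hg
      rw [h hgS, Function.update_of_ne hgi]
  simp only [cylinderMass]
  rw [hunion, measure_iUnion hdisj fun a => measurableSet_itinerary_eqOn hι S _, tsum_fintype]

lemma sum_prod_cylinderMass_update_rpow_le [Fintype α] (μ : Measure X) {C : Type*}
    (hι : Measurable ι) (s : Finset C) (S : C → Finset G) (m : ℕ) (hm : 0 < m) (u : G → α) (i : G)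
    (hi : #{c ∈ s | i ∈ S c} = m) :
    ∑ a, ∏ c ∈ s, cylinderMass μ ι (S c) (Function.update u i a) ^ (1 / (m : ℝ)) ≤
      ∏ c ∈ s, cylinderMass μ ι ((S c).erase i) u ^ (1 / (m : ℝ)) := by
  have hholder := ENNReal.lintegral_prod_norm_pow_le (μ := (Measure.count : Measure α))
    {c ∈ s | i ∈ S c} (f := fun c a => cylinderMass μ ι (S c) (Function.update u i a))
    (p := fun _ => 1 / (m : ℝ)) (fun _ _ => (measurable_of_countable _).aemeasurable)
    (by rw [Finset.sum_const, hi, nsmul_eq_mul]; field_simp) (fun _ _ => by positivity)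
  simp only [lintegral_count, tsum_fintype] at hholder
  have hconst (a : α) (c : C) (hc : i ∉ S c) :
      cylinderMass μ ι (S c) (Function.update u i a) = cylinderMass μ ι ((S c).erase i) u := by
    rw [Finset.erase_eq_of_notMem hc]
    exact dependsOn_cylinderMass μ ι (S c) fun g hg =>
      Function.update_of_ne (by rintro rfl; exact hc hg) _ _
  calc ∑ a, ∏ c ∈ s, cylinderMass μ ι (S c) (Function.update u i a) ^ (1 / (m : ℝ))
      = (∑ a, ∏ c ∈ s with i ∈ S c,
          cylinderMass μ ι (S c) (Function.update u i a) ^ (1 / (m : ℝ))) *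
        ∏ c ∈ s with i ∉ S c, cylinderMass μ ι ((S c).erase i) u ^ (1 / (m : ℝ)) := by
        rw [Finset.sum_mul]
        refine Finset.sum_congr rfl fun a _ => ?_
        rw [← Finset.prod_filter_mul_prod_filter_not s (fun c => i ∈ S c)]
        congr 1
        exact Finset.prod_congr rfl fun c hc => by rw [hconst a c (Finset.mem_filter.1 hc).2]
    _ ≤ (∏ c ∈ s with i ∈ S c, cylinderMass μ ι ((S c).erase i) u ^ (1 / (m : ℝ))) *
        ∏ c ∈ s with i ∉ S c, cylinderMass μ ι ((S c).erase i) u ^ (1 / (m : ℝ)) := by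
        gcongr
        refine hholder.trans_eq (Finset.prod_congr rfl fun c hc => ?_)
        rw [sum_cylinderMass_update μ hι (Finset.mem_filter.1 hc).2]
    _ = ∏ c ∈ s, cylinderMass μ ι ((S c).erase i) u ^ (1 / (m : ℝ)) :=
        Finset.prod_filter_mul_prod_filter_not s _ _

/-- Finner's inequality, by induction on `V`: Hölder's inequality sums out one coordinate. -/
lemma lmarginal_prod_cylinderMass_rpow_le [Finite α] (μ : Measure X) {C : Type*}
    (hι : Measurable ι) (s : Finset C) (m : ℕ) (hm : 0 < m) (V : Finset G) (S : C → Finset G)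
    (hS : ∀ i ∈ V, #{c ∈ s | i ∈ S c} = m) (u : G → α) :
    lmarginal (fun _ => (Measure.count : Measure α)) V
      (fun u => ∏ c ∈ s, cylinderMass μ ι (S c) u ^ (1 / (m : ℝ))) u ≤
      ∏ c ∈ s, cylinderMass μ ι (S c \ V) u ^ (1 / (m : ℝ)) := by
  cases nonempty_fintype α
  induction V using Finset.induction_on generalizing S u with
  | empty => simp
  | insert i V hiV ih =>
    have hmeas : Measurable fun u : G → α =>
        ∏ c ∈ s, cylinderMass μ ι (S c) u ^ (1 / (m : ℝ)) :=
      Finset.measurable_prod _ fun c _ => (measurable_cylinderMass μ ι _).pow_const _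
    have herase : ∀ j ∈ V, #{c ∈ s | j ∈ (S c).erase i} = m := fun j hj => by
      have hji : j ≠ i := fun h => hiV (h ▸ hj)
      simp only [Finset.mem_erase, hji, ne_eq, not_false_eq_true, true_and]
      exact hS j (Finset.mem_insert_of_mem hj)
    rw [lmarginal_insert' _ hmeas hiV]
    calc _ ≤ lmarginal (fun _ => (Measure.count : Measure α)) V
          (fun u => ∏ c ∈ s, cylinderMass μ ι ((S c).erase i) u ^ (1 / (m : ℝ))) u := by
          refine lmarginal_mono (fun u => ?_) u
          simp only [lintegral_count, tsum_fintype]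
          exact sum_prod_cylinderMass_update_rpow_le μ hι s S m hm u i
            (hS i (Finset.mem_insert_self _ _))
      _ ≤ _ := (ih _ herase u).trans_eq <| by
          simp only [Finset.erase_sdiff_comm, Finset.sdiff_insert]

variable (μ : Measure X) [IsProbabilityMeasure μ]

/-- Kraft's inequality for the code weights. -/
lemma sum_codeWeight_updateFinset_le_one [Fintype α] (hι : Measurable ι) {K : Finset G}
    (hK : K.Nonempty) (V : Finset G) (u : G → α) :
    ∑ v : V → α, codeWeight μ ι K V (Function.updateFinset u V v) ≤ 1 := by
  have hfinner := lmarginal_prod_cylinderMass_rpow_le μ hι (K⁻¹ * V) #K hK.card_pos V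
    (fun c => (K * {c}) ∩ V) (fun i hi => by convert card_filter_mem_translate K hi) u
  have hprod : ∏ c ∈ K⁻¹ * V, cylinderMass μ ι (((K * {c}) ∩ V) \ V) u ^ (1 / (#K : ℝ)) = 1 :=
    Finset.prod_eq_one fun c _ => by
      rw [Finset.sdiff_eq_empty_iff_subset.2 Finset.inter_subset_right, cylinderMass_empty,
        ENNReal.one_rpow]
  rw [hprod, lmarginal, lintegral_fintype] at hfinner
  simpa only [codeWeight, Measure.pi_singleton, Measure.count_singleton, Finset.prod_const_one,
    mul_one] using hfinner

/-- A point of `A` is determined on `F` by its itinerary on `V`, so the union bound over these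
itineraries is Kraft's inequality. -/
lemma measure_setOf_cylinderMass_le_mul_codeWeight_le [Finite α] (hι : Measurable ι)
    {K V F : Finset G} (hK : K.Nonempty) (hV : V ⊆ F) (A : Set X)
    (hA : ∀ x ∈ A, ∀ y ∈ A, EqOn (itinerary ι x) (itinerary ι y)
      ((F \ V : Finset G) : Set G)) (s : ℝ≥0∞) :
    μ {x ∈ A | cylinderMass μ ι F (itinerary ι x) ≤ s * codeWeight μ ι K V (itinerary ι x)} ≤
      s := by
  cases nonempty_fintype α
  rcases A.eq_empty_or_nonempty with rfl | ⟨x₀, hx₀⟩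
  · simp
  set word : (V → α) → G → α := Function.updateFinset (itinerary ι x₀) V
  have hword : ∀ x ∈ A, EqOn (itinerary ι x) (word (V.restrict (itinerary ι x))) F := by
    intro x hx g hg
    by_cases hgV : g ∈ V
    · simp [word, Function.updateFinset, hgV]
    · simpa [word, Function.updateFinset, hgV] using
        hA x hx x₀ hx₀ (Finset.mem_coe.2 (Finset.mem_sdiff.2 ⟨hg, hgV⟩))
  calc _ ≤ μ (⋃ v : V → α, {x | EqOn (itinerary ι x) (word v) F ∧
        cylinderMass μ ι F (word v) ≤ s * codeWeight μ ι K V (word v)}) := by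
        refine measure_mono fun x ⟨hxA, hx⟩ => mem_iUnion.2 ⟨V.restrict (itinerary ι x), ?_⟩
        refine ⟨hword x hxA, ?_⟩
        rwa [← dependsOn_cylinderMass μ ι F (hword x hxA),
          ← dependsOn_codeWeight μ ι K V ((hword x hxA).mono (Finset.coe_subset.2 hV))]
    _ ≤ ∑ v : V → α, μ {x | EqOn (itinerary ι x) (word v) F ∧
        cylinderMass μ ι F (word v) ≤ s * codeWeight μ ι K V (word v)} :=
        measure_iUnion_fintype_le _ _
    _ ≤ ∑ v : V → α, s * codeWeight μ ι K V (word v) := by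
        refine Finset.sum_le_sum fun v _ => ?_
        by_cases hv : cylinderMass μ ι F (word v) ≤ s * codeWeight μ ι K V (word v)
        · exact (measure_mono fun x hx => hx.1).trans hv
        · simp [hv]
    _ ≤ s := by
        rw [← Finset.mul_sum]
        exact mul_le_of_le_one_right' (sum_codeWeight_updateFinset_le_one μ hι hK V _)

end Cylinders

/-! ### Information functions -/

section Information

open scoped Finset

variable [Group G]

/-- The part of `S` that left translation by `g` moves out of `S`. -/
def shiftBoundary [DecidableEq G] (g : G) (S : Finset G) : Finset G := {v ∈ S | g * v ∉ S}

lemma card_filter_mul_notMem_le [DecidableEq G] (K V : Finset G) (κ₀ : G) :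
    #{c ∈ K⁻¹ * V | κ₀ * c ∉ V} ≤ ∑ κ ∈ K, #(shiftBoundary (κ₀ * κ⁻¹) V) := by
  have hsub : {c ∈ K⁻¹ * V | κ₀ * c ∉ V} ⊆
      K.biUnion fun κ => (shiftBoundary (κ₀ * κ⁻¹) V).image (κ⁻¹ * ·) := by
    intro c hc
    obtain ⟨hcKV, hcV⟩ := Finset.mem_filter.1 hc
    obtain ⟨κ', hκ', v, hv, rfl⟩ := Finset.mem_mul.1 hcKV
    obtain ⟨κ, hκ, rfl⟩ := Finset.mem_inv.1 hκ'
    exact Finset.mem_biUnion.2 ⟨κ, hκ, Finset.mem_image_of_mem _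
      (Finset.mem_filter.2 ⟨hv, by rwa [mul_assoc]⟩)⟩
  exact (Finset.card_le_card hsub).trans <| Finset.card_biUnion_le.trans <|
    Finset.sum_le_sum fun κ _ => Finset.card_image_le

variable [MulAction G X] [MeasurableSpace X] {α : Type*} {ι : X → α}

/-- The information function `-log μ(𝒫_S(x))`, where `𝒫` is the partition given by the labelling
`ι`. -/
noncomputable def information (μ : Measure X) (ι : X → α) (S : Finset G) (x : X) : ℝ :=
  -Real.log (cylinderMass μ ι S (itinerary ι x)).toReal

lemma cylinderMass_eq_measure_preimage (μ : Measure X) (ι : X → α) (S : Finset G) (u : G → α) :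
    cylinderMass μ ι S u = μ ((fun x => S.restrict (itinerary ι x)) ⁻¹' {S.restrict u}) :=
  congrArg μ <| Set.ext fun x => by simp [EqOn, funext_iff]

lemma information_eq_neg_log_measureReal (μ : Measure X) (ι : X → α) (S : Finset G) (x : X) :
    information μ ι S x = -Real.log
      (μ.real ((fun x => S.restrict (itinerary ι x)) ⁻¹' {S.restrict (itinerary ι x)})) := by
  rw [information, cylinderMass_eq_measure_preimage, Measure.real]

lemma exists_forall_information_le [Finite α] (μ : Measure X) (ι : X → α) (S : Finset G) :
    ∃ M : ℝ, ∀ x, information μ ι S x ≤ M := by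
  obtain ⟨M, hM⟩ := (Set.finite_range fun v : S → α =>
    -Real.log (μ.real ((fun x => S.restrict (itinerary ι x)) ⁻¹' {v}))).bddAbove
  refine ⟨M, fun x => ?_⟩
  rw [information_eq_neg_log_measureReal]
  exact hM ⟨_, rfl⟩

lemma information_mul_singleton [DecidableEq G] [MeasurableConstSMul G X] (μ : Measure X)
    [SMulInvariantMeasure G X μ] (ι : X → α) (S : Finset G) (h : G) (x : X) :
    information μ ι (S * {h}) x = information μ ι S (h • x) := by
  have hpre : {y | EqOn (itinerary ι y) (itinerary ι x) ((S * {h} : Finset G) : Set G)} =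
      (h • ·) ⁻¹' {y | EqOn (itinerary ι y) (itinerary ι (h • x)) (S : Set G)} := by
    ext y
    refine ⟨fun hy g hg => ?_, fun hy _ hs => ?_⟩
    · have h' := hy (Finset.mem_coe.2 (Finset.mul_mem_mul hg (Finset.mem_singleton_self h)))
      simpa only [itinerary, mul_smul] using h'
    · obtain ⟨g, hg, _, hh, rfl⟩ := Finset.mem_mul.1 (Finset.mem_coe.1 hs)
      rw [Finset.mem_singleton.1 hh]
      simpa only [itinerary, mul_smul] using hy hg
  simp only [information, cylinderMass]
  rw [hpre, measure_preimage_smul]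

lemma ae_cylinderMass_itinerary_ne_zero [Countable G] [Countable α] (μ : Measure X) (ι : X → α) :
    ∀ᵐ x ∂μ, ∀ S : Finset G, cylinderMass μ ι S (itinerary ι x) ≠ 0 := by
  refine ae_all_iff.2 fun S => ae_iff.2 ?_
  have hsub : {x | ¬ cylinderMass μ ι S (itinerary ι x) ≠ 0} ⊆
      ⋃ v ∈ {v : S → α | μ ((fun x => S.restrict (itinerary ι x)) ⁻¹' {v}) = 0},
        (fun x => S.restrict (itinerary ι x)) ⁻¹' {v} := by
    intro x hx
    refine mem_iUnion₂.2 ⟨S.restrict (itinerary ι x), ?_, rfl⟩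
    rw [mem_ofPred_eq, ← cylinderMass_eq_measure_preimage]
    exact not_not.1 hx
  exact measure_mono_null hsub ((measure_biUnion_null_iff (Set.to_countable _)).2 fun v hv => hv)

lemma measurable_information [MeasurableConstSMul G X] [MeasurableSpace α]
    [MeasurableSingletonClass α] [Finite α] (μ : Measure X) (hι : Measurable ι) (S : Finset G) :
    Measurable (information μ ι S) :=
  (Real.measurable_log.comp
    (((measurable_cylinderMass μ ι S).comp (measurable_itinerary hι)).ennreal_toReal)).neg

section ProbabilityMeasure

variable (μ : Measure X) [IsProbabilityMeasure μ]

lemma information_nonneg (ι : X → α) (S : Finset G) (x : X) : 0 ≤ information μ ι S x :=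
  neg_nonneg.2 <| Real.log_nonpos ENNReal.toReal_nonneg <|
    ENNReal.toReal_le_of_le_ofReal zero_le_one (by simpa [cylinderMass] using prob_le_one)

lemma cylinderMass_itinerary_eq_exp {S : Finset G} {x : X}
    (hx : cylinderMass μ ι S (itinerary ι x) ≠ 0) :
    cylinderMass μ ι S (itinerary ι x) = ENNReal.ofReal (Real.exp (-information μ ι S x)) := by
  have hfin : cylinderMass μ ι S (itinerary ι x) ≠ ⊤ := measure_ne_top _ _
  rw [information, neg_neg, Real.exp_log (ENNReal.toReal_pos hx hfin), ENNReal.ofReal_toReal hfin]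

lemma information_mono {S T : Finset G} (hST : S ⊆ T) {x : X}
    (hx : cylinderMass μ ι T (itinerary ι x) ≠ 0) :
    information μ ι S x ≤ information μ ι T x :=
  neg_le_neg <| Real.log_le_log (ENNReal.toReal_pos hx (measure_ne_top _ _)) <|
    ENNReal.toReal_mono (measure_ne_top _ _) <|
      measure_mono fun _ hy => EqOn.mono (Finset.coe_subset.2 hST) hy

lemma codeWeight_itinerary_eq_exp [DecidableEq G] (K V : Finset G) {x : X}
    (hx : ∀ S : Finset G, cylinderMass μ ι S (itinerary ι x) ≠ 0) :
    codeWeight μ ι K V (itinerary ι x) = ENNReal.ofReal (Real.exp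
      (-∑ c ∈ K⁻¹ * V, information μ ι ((K * {c}) ∩ V) x / #K)) := by
  rw [← Finset.sum_neg_distrib, Real.exp_sum,
    ENNReal.ofReal_prod_of_nonneg fun _ _ => (Real.exp_pos _).le]
  refine Finset.prod_congr rfl fun c _ => ?_
  rw [cylinderMass_itinerary_eq_exp μ (hx _), ENNReal.ofReal_rpow_of_pos (Real.exp_pos _),
    ← Real.exp_mul, neg_mul, mul_one_div]

/-- Up to a boundary term, the code spends on each `v ∈ V` the `K`-average of the information. -/
lemma exp_neg_le_codeWeight [DecidableEq G] [MeasurableConstSMul G X] [SMulInvariantMeasure G X μ]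
    (K V : Finset G) {κ₀ : G} (hκ₀ : κ₀ ∈ K) {M : ℝ} (hM : ∀ x, information μ ι K x ≤ M) {x : X}
    (hx : ∀ S : Finset G, cylinderMass μ ι S (itinerary ι x) ≠ 0) :
    ENNReal.ofReal (Real.exp (-(∑ v ∈ V, information μ ι K (κ₀⁻¹ • v • x) / #K +
      M * ∑ κ ∈ K, (#(shiftBoundary (κ₀ * κ⁻¹) V) : ℝ)))) ≤
    codeWeight μ ι K V (itinerary ι x) := by
  have hK : (1 : ℝ) ≤ #K := by exact_mod_cast Finset.card_pos.2 ⟨_, hκ₀⟩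
  have hM0 : 0 ≤ M := (information_nonneg μ ι K x).trans (hM x)
  have hterm (c : G) : information μ ι ((K * {c}) ∩ V) x / #K ≤ information μ ι K (c • x) / #K := by
    rw [← information_mul_singleton μ ι K c x]
    gcongr
    exact information_mono μ Finset.inter_subset_left (hx _)
  have hinside : ∑ c ∈ K⁻¹ * V with κ₀ * c ∈ V, information μ ι ((K * {c}) ∩ V) x / #K ≤
      ∑ v ∈ V, information μ ι K (κ₀⁻¹ • v • x) / #K :=
    calc _ ≤ ∑ c ∈ K⁻¹ * V with κ₀ * c ∈ V, information μ ι K (κ₀⁻¹ • (κ₀ * c) • x) / #K :=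
          Finset.sum_le_sum fun c _ => (hterm c).trans_eq <| by rw [mul_smul, inv_smul_smul]
      _ = ∑ v ∈ ({c ∈ K⁻¹ * V | κ₀ * c ∈ V} : Finset G).image (κ₀ * ·),
            information μ ι K (κ₀⁻¹ • v • x) / #K := by
          rw [Finset.sum_image fun a _ b _ h => mul_left_cancel h]
      _ ≤ _ := Finset.sum_le_sum_of_subset_of_nonneg
          (Finset.image_subset_iff.2 fun c hc => (Finset.mem_filter.1 hc).2)
          fun v _ _ => div_nonneg (information_nonneg μ ι K _) (Nat.cast_nonneg _)
  have houtside : ∑ c ∈ K⁻¹ * V with κ₀ * c ∉ V, information μ ι ((K * {c}) ∩ V) x / #K ≤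
      M * ∑ κ ∈ K, (#(shiftBoundary (κ₀ * κ⁻¹) V) : ℝ) :=
    calc _ ≤ #{c ∈ K⁻¹ * V | κ₀ * c ∉ V} • M := Finset.sum_le_card_nsmul _ _ _ fun c _ =>
          (hterm c).trans ((div_le_self (information_nonneg μ ι K _) hK).trans (hM _))
      _ = M * (#{c ∈ K⁻¹ * V | κ₀ * c ∉ V} : ℝ) := by rw [nsmul_eq_mul, mul_comm]
      _ ≤ _ := by
          gcongr
          exact_mod_cast card_filter_mul_notMem_le K V κ₀
  rw [codeWeight_itinerary_eq_exp μ K V hx,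
    ← Finset.sum_filter_add_sum_filter_not (K⁻¹ * V) (fun c => κ₀ * c ∈ V)]
  gcongr

lemma cylinderMass_le_exp_mul_codeWeight [DecidableEq G] {K V S : Finset G} {c t : ℝ} {x : X}
    (hcost : ENNReal.ofReal (Real.exp (-c)) ≤ codeWeight μ ι K V (itinerary ι x))
    (hx : cylinderMass μ ι S (itinerary ι x) ≠ 0) (hinfo : t + c ≤ information μ ι S x) :
    cylinderMass μ ι S (itinerary ι x) ≤
      ENNReal.ofReal (Real.exp (-t)) * codeWeight μ ι K V (itinerary ι x) := by
  refine le_trans ?_ (mul_le_mul_right hcost _)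
  rw [cylinderMass_itinerary_eq_exp μ hx, ← ENNReal.ofReal_mul (Real.exp_pos _).le, ← Real.exp_add]
  exact ENNReal.ofReal_le_ofReal (Real.exp_le_exp.2 (by linarith))

variable [MeasurableConstSMul G X] [MeasurableSpace α] [MeasurableSingletonClass α]

lemma memLp_information [Finite α] (hι : Measurable ι) (S : Finset G) (p : ℝ≥0∞) :
    MemLp (information μ ι S) p μ := by
  obtain ⟨M, hM⟩ := exists_forall_information_le μ ι S
  refine .of_bound (measurable_information μ hι S).aestronglyMeasurable M (ae_of_all _ fun x => ?_)
  rw [Real.norm_of_nonneg (information_nonneg μ ι S x)]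
  exact hM x

lemma integrable_information [Finite α] (hι : Measurable ι) (S : Finset G) :
    Integrable (information μ ι S) μ :=
  memLp_one_iff_integrable.1 (memLp_information μ hι S 1)

lemma integrable_exp_information [Finite α] (hι : Measurable ι) (S : Finset G) :
    Integrable (fun x => Real.exp (information μ ι S x)) μ := by
  obtain ⟨M, hM⟩ := exists_forall_information_le μ ι S
  refine .of_bound (measurable_information μ hι S).exp.aestronglyMeasurable (Real.exp M)
    (ae_of_all _ fun x => ?_)
  rw [Real.norm_eq_abs, abs_of_pos (Real.exp_pos _)]
  exact Real.exp_le_exp.2 (hM x)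

variable [Fintype α]

lemma integral_comp_restrict_itinerary [DecidableEq G] (hι : Measurable ι) (S : Finset G)
    (Φ : (S → α) → ℝ) :
    ∫ x, Φ (S.restrict (itinerary ι x)) ∂μ =
      ∑ v, μ.real ((fun x => S.restrict (itinerary ι x)) ⁻¹' {v}) * Φ v := by
  have hmeas : Measurable fun x => S.restrict (itinerary ι x) :=
    (Finset.measurable_restrict S).comp (measurable_itinerary hι)
  rw [← integral_map hmeas.aemeasurable (measurable_of_countable Φ).aestronglyMeasurable,
    integral_fintype .of_finite]
  refine Finset.sum_congr rfl fun v _ => ?_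
  rw [smul_eq_mul, map_measureReal_apply hmeas (measurableSet_singleton v)]

lemma integral_information_eq_sum [DecidableEq G] (hι : Measurable ι) (S : Finset G) :
    ∫ x, information μ ι S x ∂μ =
      ∑ v, Real.negMulLog (μ.real ((fun x => S.restrict (itinerary ι x)) ⁻¹' {v})) := by
  simp only [information_eq_neg_log_measureReal]
  rw [integral_comp_restrict_itinerary μ hι S
    fun v => -Real.log (μ.real ((fun x => S.restrict (itinerary ι x)) ⁻¹' {v}))]
  simp only [Real.negMulLog, mul_neg, neg_mul]

lemma integral_exp_information_le (hι : Measurable ι) (S : Finset G) :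
    ∫ x, Real.exp (information μ ι S x) ∂μ ≤ (Fintype.card α : ℝ) ^ #S := by
  classical
  simp only [information_eq_neg_log_measureReal]
  rw [integral_comp_restrict_itinerary μ hι S
    fun v => Real.exp (-Real.log (μ.real ((fun x => S.restrict (itinerary ι x)) ⁻¹' {v})))]
  calc _ ≤ ∑ _v : S → α, (1 : ℝ) := Finset.sum_le_sum fun v _ => by
        rcases (measureReal_nonneg (μ := μ)
          (s := (fun x => S.restrict (itinerary ι x)) ⁻¹' {v})).eq_or_lt with h | h
        · simp [← h]
        · rw [Real.exp_neg, Real.exp_log h, mul_inv_cancel₀ h.ne']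
    _ = (Fintype.card α : ℝ) ^ #S := by simp

/-- From `t ≤ b + exp (t - b)` with `b = |S| log |α|`. -/
lemma setIntegral_information_le (hι : Measurable ι) (S : Finset G) (B : Set X) :
    ∫ x in B, information μ ι S x ∂μ ≤ #S * Real.log (Fintype.card α) * μ.real B + 1 := by
  have : Nonempty α := (nonempty_of_isProbabilityMeasure μ).map ι
  set b : ℝ := #S * Real.log (Fintype.card α)
  have hexpb : Real.exp b = (Fintype.card α : ℝ) ^ #S := by
    rw [Real.exp_nat_mul, Real.exp_log (by exact_mod_cast Fintype.card_pos)]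
  have hint : Integrable (fun x => Real.exp (information μ ι S x - b)) μ := by
    simpa only [Real.exp_sub] using (integrable_exp_information μ hι S).div_const _
  have hle_one : ∫ x, Real.exp (information μ ι S x - b) ∂μ ≤ 1 := by
    simp only [Real.exp_sub, integral_div]
    rw [div_le_one (Real.exp_pos b), hexpb]
    exact integral_exp_information_le μ hι S
  calc ∫ x in B, information μ ι S x ∂μ
      ≤ ∫ x in B, (b + Real.exp (information μ ι S x - b)) ∂μ :=
        integral_mono (integrable_information μ hι S).integrableOn
          ((integrable_const b).add hint.integrableOn) fun x => by
            linarith [Real.add_one_le_exp (information μ ι S x - b)]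
    _ = b * μ.real B + ∫ x in B, Real.exp (information μ ι S x - b) ∂μ := by
        rw [integral_add (integrable_const b) hint.integrableOn]
        simp [mul_comm]
    _ ≤ b * μ.real B + 1 := by
        gcongr
        exact (setIntegral_le_integral hint (ae_of_all _ fun x => (Real.exp_pos _).le)).trans
          hle_one

end ProbabilityMeasure

end Information

/-! ### The mean ergodic theorem along Følner sequences -/

section MeanErgodic

open scoped Finset

section Hilbert

variable {E : Type*} [NormedAddCommGroup E] [InnerProductSpace ℝ E]

/-- The average of the isometries `U v` over `v ∈ S`; it is `0` for empty `S`. -/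
noncomputable def averageOver (U : G → E →ₗᵢ[ℝ] E) (S : Finset G) : E →L[ℝ] E :=
  (#S : ℝ)⁻¹ • ∑ v ∈ S, (U v).toContinuousLinearMap

lemma averageOver_apply (U : G → E →ₗᵢ[ℝ] E) (S : Finset G) (y : E) :
    averageOver U S y = (#S : ℝ)⁻¹ • ∑ v ∈ S, U v y := by
  simp [averageOver]

lemma norm_sum_isometry_le (U : G → E →ₗᵢ[ℝ] E) (S : Finset G) (y : E) :
    ‖∑ v ∈ S, U v y‖ ≤ #S * ‖y‖ :=
  (norm_sum_le _ _).trans_eq <| by simp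

lemma lipschitzWith_averageOver (U : G → E →ₗᵢ[ℝ] E) (S : Finset G) :
    LipschitzWith 1 (averageOver U S) := by
  refine AddMonoidHomClass.lipschitz_of_bound_nnnorm (averageOver U S) 1 fun y => ?_
  rw [one_mul]
  change ‖averageOver U S y‖ ≤ ‖y‖
  rw [averageOver_apply, norm_smul, norm_inv, Real.norm_natCast]
  exact inv_mul_le_of_le_mul₀ (Nat.cast_nonneg _) (norm_nonneg _) (norm_sum_isometry_le U S y)

variable [Group G]

lemma norm_averageOver_sub_le {U : G → E →ₗᵢ[ℝ] E} (hU : ∀ v g y, U v (U g y) = U (g * v) y)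
    (S : Finset G) (g : G) (y : E) :
    ‖averageOver U S (y - U g y)‖ ≤
      ((symmDiff (S : Set G) ((g * ·) '' (S : Set G))).ncard : ℝ) / #S * ‖y‖ := by
  classical
  have hcard : (symmDiff (S : Set G) ((g * ·) '' (S : Set G))).ncard =
      #(S \ S.image (g * ·)) + #(S.image (g * ·) \ S) := by
    rw [← Finset.coe_image, ← Finset.coe_symmDiff, Set.ncard_coe_finset]
    exact Finset.card_union_of_disjoint disjoint_sdiff_sdiff
  have htelescope : ∑ v ∈ S, U v (y - U g y) =
      ∑ v ∈ S \ S.image (g * ·), U v y - ∑ v ∈ S.image (g * ·) \ S, U v y := by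
    rw [Finset.sum_sdiff_sub_sum_sdiff, Finset.sum_image fun a _ b _ h => mul_left_cancel h]
    simp only [map_sub, hU, Finset.sum_sub_distrib]
  rw [averageOver_apply, norm_smul, norm_inv, Real.norm_natCast, div_eq_inv_mul, mul_assoc, hcard,
    htelescope, Nat.cast_add, add_mul]
  gcongr
  exact (norm_sub_le _ _).trans
    (add_le_add (norm_sum_isometry_le U _ y) (norm_sum_isometry_le U _ y))

/-- The vectors on which the averages tend to `0` form a closed subspace that contains the
coboundaries `y - U g y`, and whatever is orthogonal to all of these is invariant. -/
theorem tendsto_averageOver_zero [CompleteSpace E] {U : G → E →ₗᵢ[ℝ] E}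
    (hU : ∀ v g y, U v (U g y) = U (g * v) y) {F : ℕ → Finset G} (hF : IsFolnerSeq F) {f : E}
    (hf : ∀ z, (∀ g, U g z = z) → inner ℝ f z = 0) :
    Tendsto (fun n => averageOver U (F n) f) atTop (𝓝 0) := by
  let N : Submodule ℝ E :=
    { carrier := {y | Tendsto (fun n => averageOver U (F n) y) atTop (𝓝 0)}
      zero_mem' := by simp
      add_mem' := fun ha hb => by
        simp only [mem_ofPred_eq, map_add] at ha hb ⊢
        simpa only [add_zero] using ha.add hb
      smul_mem' := fun c y hy => by
        simp only [mem_ofPred_eq, map_smul] at hy ⊢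
        simpa only [smul_zero] using hy.const_smul c }
  have hclosed : IsClosed (N : Set E) := by
    have hequi : Equicontinuous fun n => (averageOver U (F n) : E → E) :=
      (LipschitzWith.uniformEquicontinuous _ 1
        fun n => lipschitzWith_averageOver U (F n)).equicontinuous
    exact hequi.isClosed_setOfPred_tendsto continuous_const
  have hcoboundary (g : G) (y : E) : y - U g y ∈ N :=
    squeeze_zero_norm (fun n => norm_averageOver_sub_le hU (F n) g y) <| by
      simpa only [zero_mul] using (hF g).mul_const ‖y‖
  have hinvariant : ∀ z ∈ Nᗮ, ∀ g, U g z = z := by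
    intro z hz g
    have horth : inner ℝ (z - U g z) z = 0 := hz _ (hcoboundary g z)
    rw [inner_sub_left, real_inner_self_eq_norm_sq] at horth
    have hnorm : ‖U g z - z‖ ^ 2 = 0 := by
      rw [norm_sub_sq_real, (U g).norm_map]
      linarith
    exact sub_eq_zero.1 (norm_eq_zero.1 (pow_eq_zero_iff two_ne_zero |>.1 hnorm))
  have : CompleteSpace N := hclosed.completeSpace_coe
  have hmem : f ∈ Nᗮᗮ := fun z hz => by
    rw [real_inner_comm]
    exact hf z (hinvariant z hz)
  rw [N.orthogonal_orthogonal] at hmem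
  exact hmem

end Hilbert

variable [Group G] [Countable G] [MulAction G X] [MeasurableSpace X] [MeasurableConstSMul G X]
  {μ : Measure X} [IsProbabilityMeasure μ]

lemma ae_eq_const_of_forall_ae_smul_eq (herg : IsErgodicGAction G μ) {w : X → ℝ}
    (hw : Measurable w) (hinv : ∀ g : G, ∀ᵐ x ∂μ, w (g • x) = w x) :
    ∃ c, ∀ᵐ x ∂μ, w x = c := by
  set Y : Set X := {x | ∀ g : G, w (g • x) = w x}
  have hY : MeasurableSet Y := by
    have hinter : Y = ⋂ g : G, {x | w (g • x) = w x} := Set.ext fun x => by simp [Y]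
    rw [hinter]
    exact MeasurableSet.iInter fun g =>
      measurableSet_eq_fun (hw.comp (measurable_const_smul g)) hw
  have hYinv (g : G) {x : X} (hx : x ∈ Y) : g • x ∈ Y := fun h => by
    rw [← mul_smul, hx, hx]
  refine exists_eventuallyEq_const_of_forall_separating (l := ae μ) (f := w) MeasurableSet
    fun s hs => ?_
  have hsmul : ∀ g : G, (g • ·) ⁻¹' (Y ∩ w ⁻¹' s) = Y ∩ w ⁻¹' s := fun g => by
    ext x
    simp only [mem_preimage, mem_inter_iff]
    refine ⟨fun ⟨hgx, hs⟩ => ?_, fun ⟨hx, hs⟩ => ⟨hYinv g hx, by rwa [hx g]⟩⟩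
    have hx : x ∈ Y := by simpa only [inv_smul_smul] using hYinv g⁻¹ hgx
    exact ⟨hx, by rwa [hx g] at hs⟩
  have hYs : MeasurableSet (Y ∩ w ⁻¹' s) := hY.inter (hw hs)
  rcases herg _ hYs hsmul with h | h
  · right
    filter_upwards [ae_all_iff.2 hinv, measure_eq_zero_iff_ae_notMem.1 h] with x hx hxs hws
    exact hxs ⟨hx, hws⟩
  · left
    filter_upwards [(mem_ae_iff_prob_eq_one hYs).2 h] with x hx
    exact hx.2

variable [SMulInvariantMeasure G X μ]

theorem tendstoInMeasure_average_sub_integral (herg : IsErgodicGAction G μ) {F : ℕ → Finset G}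
    (hF : IsFolnerSeq F) {ψ : X → ℝ} (hψ : MemLp ψ 2 μ) :
    TendstoInMeasure μ (fun n x => (#(F n) : ℝ)⁻¹ * ∑ g ∈ F n, (ψ (g • x) - ∫ y, ψ y ∂μ)) atTop
      fun _ => 0 := by
  have hmp (g : G) : MeasurePreserving (fun x : X => g • x) μ μ := measurePreserving_smul g μ
  set U : G → Lp ℝ 2 μ →ₗᵢ[ℝ] Lp ℝ 2 μ := fun g => Lp.compMeasurePreservingₗᵢ ℝ _ (hmp g)
  have hUae (g : G) (f : Lp ℝ 2 μ) : ∀ᵐ x ∂μ, U g f x = f (g • x) :=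
    Lp.coeFn_compMeasurePreserving f (hmp g)
  have hU : ∀ v g f, U v (U g f) = U (g * v) f := fun v g f => Lp.ext <| by
    filter_upwards [hUae v (U g f), hUae (g * v) f, (hmp v).quasiMeasurePreserving.ae (hUae g f)]
      with x h₁ h₂ h₃
    rw [h₁, h₂, h₃, mul_smul]
  have hcentered : MemLp (fun x => ψ x - ∫ y, ψ y ∂μ) 2 μ := hψ.sub (memLp_const _)
  set f : Lp ℝ 2 μ := hcentered.toLp
  have hf : ∀ z, (∀ g, U g z = z) → inner ℝ f z = 0 := by
    intro z hz
    obtain ⟨c, hc⟩ := ae_eq_const_of_forall_ae_smul_eq herg (Lp.stronglyMeasurable z).measurable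
      fun g => by
        filter_upwards [hUae g z] with x hx
        rw [← hx, hz]
    calc inner ℝ f z = ∫ x, c * (ψ x - ∫ y, ψ y ∂μ) ∂μ := by
          rw [L2.inner_def]
          refine integral_congr_ae ?_
          filter_upwards [hcentered.coeFn_toLp, hc] with x h₁ h₂
          rw [h₁, h₂]
          rfl
      _ = 0 := by
          rw [integral_const_mul, integral_sub (hψ.integrable one_le_two) (integrable_const _)]
          simp
  refine (tendstoInMeasure_of_tendsto_Lp (tendsto_averageOver_zero hU hF hf)).congr
    (fun n => ?_) (Lp.coeFn_zero ℝ 2 μ)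
  have hsum : ∀ᵐ x ∂μ, ∀ v : G, U v f x = ψ (v • x) - ∫ y, ψ y ∂μ := ae_all_iff.2 fun v => by
    filter_upwards [hUae v f, (hmp v).quasiMeasurePreserving.ae hcentered.coeFn_toLp] with x h₁ h₂
    rw [h₁, h₂]
  rw [averageOver_apply]
  filter_upwards [hsum, Lp.coeFn_smul (#(F n) : ℝ)⁻¹ (∑ v ∈ F n, U v f),
    Lp.coeFn_finsetSum (F n) (fun v => U v f)] with x h₁ h₂ h₃
  rw [h₂, Pi.smul_apply, h₃, Finset.sum_apply, smul_eq_mul]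
  simp only [h₁]

lemma tendsto_measureReal_mul_card_lt_sum_smul (herg : IsErgodicGAction G μ) {F : ℕ → Finset G}
    (hF : IsFolnerSeq F) {ψ : X → ℝ} (hψ : MemLp ψ 2 μ) {β : ℝ} (hβ : ∫ x, ψ x ∂μ < β) :
    Tendsto (fun n => μ.real {x | β * #(F n) < ∑ g ∈ F n, ψ (g • x)}) atTop (𝓝 0) := by
  have hlim := tendstoInMeasure_iff_measureReal_dist.1
    (tendstoInMeasure_average_sub_integral herg hF hψ) _ (sub_pos.2 hβ)
  refine squeeze_zero (fun _ => measureReal_nonneg) (fun n => measureReal_mono fun x hx => ?_) hlim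
  have hpos : (0 : ℝ) < #(F n) := by
    rcases (F n).eq_empty_or_nonempty with h | h
    · simp [h] at hx
    · exact_mod_cast h.card_pos
  rw [mem_ofPred_eq] at hx ⊢
  rw [Real.dist_eq, sub_zero]
  refine le_trans ?_ (le_abs_self _)
  rw [Finset.sum_sub_distrib, Finset.sum_const, nsmul_eq_mul, ← div_eq_inv_mul, le_div_iff₀ hpos]
  linarith

end MeanErgodic

/-! ### The Shannon–McMillan theorem in probability -/

section ShannonMcMillan

open scoped Finset

section Folner

variable {F : ℕ → Finset G}

lemma eventually_mul_log_le_card (hGrow : GrowthCond F) (c : ℝ) :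
    ∀ᶠ n : ℕ in atTop, c * Real.log n ≤ #(F n) := by
  filter_upwards [hGrow.eventually_ge_atTop c, eventually_ge_atTop 2] with n hc hn
  exact (le_div_iff₀ (Real.log_pos (by exact_mod_cast hn))).1 hc

lemma tendsto_card_atTop (hGrow : GrowthCond F) : Tendsto (fun n => (#(F n) : ℝ)) atTop atTop := by
  refine tendsto_atTop_mono' _ (eventually_mul_log_le_card hGrow 1) ?_
  simp only [one_mul]
  exact Real.tendsto_log_atTop.comp tendsto_natCast_atTop_atTop

lemma tendsto_exp_neg_mul_card (hGrow : GrowthCond F) {c : ℝ} (hc : 0 < c) :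
    Tendsto (fun n => Real.exp (-(c * #(F n)))) atTop (𝓝 0) :=
  Real.tendsto_exp_neg_atTop_nhds_zero.comp ((tendsto_card_atTop hGrow).const_mul_atTop hc)

variable [Group G] [DecidableEq G]

lemma tendsto_card_shiftBoundary_div (hF : IsFolnerSeq F) (g : G) :
    Tendsto (fun n => (#(shiftBoundary g (F n)) : ℝ) / #(F n)) atTop (𝓝 0) := by
  refine squeeze_zero (fun n => by positivity) (fun n => ?_) (hF g)
  gcongr
  rw [← Finset.card_image_of_injective _ (mul_right_injective g), ← Set.ncard_coe_finset,
    ← Finset.coe_image, ← Finset.coe_symmDiff]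
  refine Set.ncard_le_ncard (Finset.coe_subset.2 fun a ha => ?_) (Finset.finite_toSet _)
  obtain ⟨v, hv, rfl⟩ := Finset.mem_image.1 ha
  obtain ⟨hvF, hgv⟩ := Finset.mem_filter.1 hv
  exact Finset.mem_symmDiff.2 (Or.inr ⟨Finset.mem_image_of_mem _ hvF, hgv⟩)

lemma eventually_sum_card_shiftBoundary_le (hF : IsFolnerSeq F) (hGrow : GrowthCond F) {T : Type*}
    (s : Finset T) (c : T → G) (M : ℝ) {η : ℝ} (hη : 0 < η) :
    ∀ᶠ n in atTop, M * ∑ t ∈ s, (#(shiftBoundary (c t) (F n)) : ℝ) ≤ η * #(F n) := by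
  have hlim : Tendsto (fun n => M * ∑ t ∈ s, (#(shiftBoundary (c t) (F n)) : ℝ) / #(F n)) atTop
      (𝓝 0) := by
    simpa using (tendsto_finsetSum s fun t _ => tendsto_card_shiftBoundary_div hF (c t)).const_mul M
  filter_upwards [hlim.eventually_lt_const hη, (tendsto_card_atTop hGrow).eventually_gt_atTop 0]
    with n hn hpos
  rw [← Finset.sum_div, ← mul_div_assoc, div_lt_iff₀ hpos] at hn
  exact hn.le

end Folner

lemma mul_measureReal_le_integral_max_sub [MeasurableSpace X] (μ : Measure X)
    [IsProbabilityMeasure μ] {f : X → ℝ} (hf : Measurable f) (hint : Integrable f μ) (c t : ℝ) :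
    t * μ.real {x | f x ≤ c - t} ≤ ∫ x, max (f x - c) 0 ∂μ - (∫ x, f x ∂μ - c) := by
  have hlow : MeasurableSet {x | f x ≤ c - t} := measurableSet_le hf measurable_const
  have hsub : Integrable (fun x => f x - c) μ := hint.sub (integrable_const c)
  calc t * μ.real {x | f x ≤ c - t} = ∫ x, {x | f x ≤ c - t}.indicator (fun _ => t) x ∂μ := by
        rw [integral_indicator_const t hlow, smul_eq_mul, mul_comm]
    _ ≤ ∫ x, (max (f x - c) 0 - (f x - c)) ∂μ := by
        refine integral_mono ((integrable_const t).indicator hlow) (hsub.pos_part.sub hsub)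
          fun x => ?_
        by_cases hx : x ∈ {x | f x ≤ c - t}
        · rw [indicator_of_mem hx]
          linarith [le_max_right (f x - c) 0, mem_ofPred_eq ▸ hx]
        · rw [indicator_of_notMem hx]
          linarith [le_max_left (f x - c) 0]
    _ = _ := by
        rw [integral_sub hsub.pos_part hsub, integral_sub hint (integrable_const c)]
        simp

variable [Group G] [MulAction G X] [MeasurableSpace X] [MeasurableConstSMul G X]
  {μ : Measure X}

lemma integral_comp_smul [SMulInvariantMeasure G X μ] (f : X → ℝ) (g : G) :
    ∫ x, f (g • x) ∂μ = ∫ x, f x ∂μ :=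
  (measurePreserving_smul g μ).integral_comp (measurableEmbedding_const_smul g) f

variable [IsProbabilityMeasure μ] {α : Type*} [MeasurableSpace α] [MeasurableSingletonClass α]
  {ι : X → α} {F : ℕ → Finset G} {h : ℝ}

lemma integral_max_information_sub_le [Fintype α] (hι : Measurable ι) (hh : 0 ≤ h) {η : ℝ}
    (hη : 0 ≤ η) (S : Finset G) :
    ∫ x, max (information μ ι S x - h * #S) 0 ∂μ ≤ η * #S +
      (#S * Real.log (Fintype.card α) *
        μ.real {x | (h + η) * #S < information μ ι S x} + 1) := by
  set B : Set X := {x | (h + η) * #S < information μ ι S x}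
  have hB : MeasurableSet B := measurableSet_lt measurable_const (measurable_information μ hι S)
  have hint := integrable_information μ hι S
  have hS : (0 : ℝ) ≤ h * #S ∧ 0 ≤ η * #S := by constructor <;> positivity
  calc ∫ x, max (information μ ι S x - h * #S) 0 ∂μ
      ≤ ∫ x, (η * #S + B.indicator (information μ ι S) x) ∂μ := by
        refine integral_mono (hint.sub (integrable_const _)).pos_part
          ((integrable_const _).add (hint.indicator hB)) fun x => ?_
        by_cases hx : x ∈ B
        · have hnonneg := information_nonneg μ ι S x
          rw [indicator_of_mem hx]
          exact max_le (by linarith) (by linarith)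
        · have hx' : information μ ι S x ≤ (h + η) * #S := not_lt.1 hx
          rw [indicator_of_notMem hx]
          exact max_le (by linarith) (by linarith)
    _ = η * #S + ∫ x in B, information μ ι S x ∂μ := by
        rw [integral_add (integrable_const _) (hint.indicator hB), integral_indicator hB]
        simp
    _ ≤ _ := by
        gcongr
        exact setIntegral_information_le μ hι S B

variable [Countable G] [SMulInvariantMeasure G X μ] [Finite α]

lemma tendsto_measureReal_lt_information (herg : IsErgodicGAction G μ)
    (hι : Measurable ι) (hF : IsFolnerSeq F) (hGrow : GrowthCond F) {K : Finset G}
    (hK : K.Nonempty) {η : ℝ} (hη : 0 < η) (hent : ∫ x, information μ ι K x ∂μ ≤ h * #K) :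
    Tendsto (fun n => μ.real {x | (h + η) * #(F n) < information μ ι (F n) x}) atTop (𝓝 0) := by
  classical
  obtain ⟨κ₀, hκ₀⟩ := hK
  obtain ⟨M, hM⟩ := exists_forall_information_le μ ι K
  have hKpos : (0 : ℝ) < #K := by exact_mod_cast Finset.card_pos.2 ⟨_, hκ₀⟩
  set ψ : X → ℝ := fun x => information μ ι K (κ₀⁻¹ • x) / #K
  have hψ : MemLp ψ 2 μ := by
    simpa only [ψ, div_eq_inv_mul, Function.comp_apply] using
      ((memLp_information μ hι K 2).comp_measurePreserving
        (measurePreserving_smul κ₀⁻¹ μ)).const_mul (#K : ℝ)⁻¹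
  have hψint : ∫ x, ψ x ∂μ ≤ h := by
    rw [integral_div, integral_comp_smul (information μ ι K), div_le_iff₀ hKpos]
    exact hent
  have hlim := (tendsto_measureReal_mul_card_lt_sum_smul herg hF hψ (β := h + η / 3)
    (by linarith)).add (tendsto_exp_neg_mul_card hGrow (c := η / 3) (by positivity))
  rw [add_zero] at hlim
  refine squeeze_zero' (Eventually.of_forall fun n => measureReal_nonneg) ?_ hlim
  filter_upwards [eventually_sum_card_shiftBoundary_le hF hGrow K (fun κ => κ₀ * κ⁻¹) M
    (η := η / 3) (by positivity)] with n hbdry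
  have hcoded := measure_setOf_cylinderMass_le_mul_codeWeight_le μ hι ⟨κ₀, hκ₀⟩
    (subset_refl (F n)) univ (by simp) (ENNReal.ofReal (Real.exp (-(η / 3 * #(F n)))))
  refine le_trans ?_ ((measureReal_union_le _ _).trans
    (add_le_add le_rfl (ENNReal.toReal_le_of_le_ofReal (Real.exp_pos _).le hcoded)))
  refine ENNReal.toReal_mono (measure_ne_top _ _) (measure_mono_ae ?_)
  filter_upwards [ae_cylinderMass_itinerary_ne_zero (G := G) μ ι] with x hx hinfo
  refine or_iff_not_imp_left.2 fun hsum => ⟨mem_univ x, ?_⟩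
  refine cylinderMass_le_exp_mul_codeWeight μ (exp_neg_le_codeWeight μ K (F n) hκ₀ hM hx) (hx _) ?_
  have hsum' : ∑ g ∈ F n, ψ (g • x) ≤ (h + η / 3) * #(F n) := not_lt.1 hsum
  have hinfo' : (h + η) * #(F n) < information μ ι (F n) x := hinfo
  linarith

theorem eventually_integral_max_information_sub_le (herg : IsErgodicGAction G μ)
    (hι : Measurable ι) (hF : IsFolnerSeq F) (hGrow : GrowthCond F) (hh : 0 ≤ h)
    (hent : ∀ η > 0, ∃ᶠ n in atTop, ∫ x, information μ ι (F n) x ∂μ ≤ (h + η) * #(F n)) {η : ℝ}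
    (hη : 0 < η) :
    ∀ᶠ n in atTop, ∫ x, max (information μ ι (F n) x - h * #(F n)) 0 ∂μ ≤ η * #(F n) := by
  cases nonempty_fintype α
  have hcard := tendsto_card_atTop hGrow
  obtain ⟨m, hm, hmpos⟩ := ((hent (η / 4) (by positivity)).and_eventually
    (hcard.eventually_gt_atTop 0)).exists
  have hlim := (tendsto_measureReal_lt_information herg hι hF hGrow
    (Finset.card_pos.1 (by exact_mod_cast hmpos)) (η := η / 4) (by positivity) hm).const_mul
    (Real.log (Fintype.card α))
  rw [mul_zero] at hlim
  filter_upwards [hlim.eventually_le_const (show 0 < η / 4 by positivity),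
    (hcard.const_mul_atTop (show 0 < η / 4 by positivity)).eventually_ge_atTop 1] with n hB hn
  refine (integral_max_information_sub_le hι hh (η := η / 2) (by positivity) (F n)).trans ?_
  rw [add_assoc, show η / 4 + η / 4 = η / 2 by ring] at hB
  linarith [mul_le_mul_of_nonneg_left hB (Nat.cast_nonneg (α := ℝ) #(F n))]

theorem tendsto_measureReal_information_le (herg : IsErgodicGAction G μ) (hι : Measurable ι)
    (hF : IsFolnerSeq F) (hGrow : GrowthCond F) (hh : 0 ≤ h)
    (hent : ∀ η > 0, ∃ᶠ n in atTop, ∫ x, information μ ι (F n) x ∂μ ≤ (h + η) * #(F n))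
    (hent' : ∀ η > 0, ∀ᶠ n in atTop, (h - η) * #(F n) ≤ ∫ x, information μ ι (F n) x ∂μ) {t : ℝ}
    (ht : 0 < t) :
    Tendsto (fun n => μ.real {x | information μ ι (F n) x ≤ (h - t) * #(F n)}) atTop (𝓝 0) := by
  refine tendsto_order.2 ⟨fun b hb => Eventually.of_forall fun n => hb.trans_le measureReal_nonneg,
    fun b hb => ?_⟩
  filter_upwards [hent' (b * t / 3) (by positivity),
    eventually_integral_max_information_sub_le herg hι hF hGrow hh hent (η := b * t / 3)
      (by positivity), (tendsto_card_atTop hGrow).eventually_gt_atTop 0] with n hlow hup hpos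
  have hle := mul_measureReal_le_integral_max_sub μ (measurable_information μ hι (F n))
    (integrable_information μ hι (F n)) (h * #(F n)) (t * #(F n))
  rw [← sub_mul] at hle
  refine lt_of_mul_lt_mul_left (a := t * #(F n)) ?_ (by positivity)
  linarith [mul_pos (mul_pos hb ht) hpos]

end ShannonMcMillan

/-! ### Coverings by tiles of a tempered sequence -/

section TemperedCovering

open scoped Finset

variable [Group G] [DecidableEq G]

lemma mem_mul_singleton_iff_div_mem {S : Finset G} {c g : G} : g ∈ S * {c} ↔ g / c ∈ S := by
  simp only [Finset.mem_mul, Finset.mem_singleton, exists_eq_left, ← eq_div_iff_mul_eq',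
    exists_eq_right]

lemma sum_card_mul_singleton_inter_le (S A W : Finset G) :
    ∑ c ∈ A, #((S * {c}) ∩ W) ≤ #W * #S := by
  calc ∑ c ∈ A, #((S * {c}) ∩ W) = ∑ w ∈ W, #{c ∈ A | w ∈ S * {c}} := by
        simp_rw [Finset.inter_comm _ W, ← Finset.filter_mem_eq_inter]
        exact Finset.sum_card_bipartiteAbove_eq_sum_card_bipartiteBelow _
    _ ≤ ∑ _w ∈ W, #S := by
        refine Finset.sum_le_sum fun w _ => Finset.card_le_card_of_injOn (w / ·) (fun c hc => ?_)
          fun c _ c' _ h => div_right_injective h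
        exact mem_mul_singleton_iff_div_mem.1 (Finset.mem_filter.1 hc).2
    _ = #W * #S := Finset.sum_const_nat fun _ _ => rfl

lemma exists_subset_card_biUnion_mul_singleton {S : Finset G} (hS : S.Nonempty) (A : Finset G)
    {θ : ℝ} (hθ : θ ≤ 1) :
    ∃ B ⊆ A, (1 - θ) * (#B * #S) ≤ #(B.biUnion fun c => S * {c}) ∧
      θ * #A ≤ #(B.biUnion fun c => S * {c}) := by
  let admissible := A.powerset.filter fun B =>
    (1 - θ) * (#B * #S) ≤ (#(B.biUnion fun c => S * {c}) : ℝ)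
  obtain ⟨B, hB, hmax⟩ := admissible.exists_max_image Finset.card
    ⟨∅, by simp [admissible]⟩
  obtain ⟨hBA, hBcard⟩ := Finset.mem_filter.1 hB
  rw [Finset.mem_powerset] at hBA
  refine ⟨B, hBA, hBcard, ?_⟩
  set W := B.biUnion fun c => S * {c}
  have hoverlap : ∀ c ∈ A, θ * #S ≤ #((S * {c}) ∩ W) := by
    intro c hc
    by_cases hcB : c ∈ B
    · have hsub : S * {c} ⊆ W := fun g hg => Finset.mem_biUnion.2 ⟨c, hcB, hg⟩
      rw [Finset.inter_eq_left.2 hsub, Finset.card_mul_singleton]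
      exact mul_le_of_le_one_left (Nat.cast_nonneg _) hθ
    by_contra! hlt
    have hunion : (#((S * {c}) ∪ W) + #((S * {c}) ∩ W) : ℝ) = #S + #W := by
      exact_mod_cast (Finset.card_union_add_card_inter (S * {c}) W).trans
        (by rw [Finset.card_mul_singleton])
    refine (hmax (insert c B) (Finset.mem_filter.2 ⟨?_, ?_⟩)).not_gt
      (Finset.card_lt_card (Finset.ssubset_insert hcB))
    · exact Finset.mem_powerset.2 (Finset.insert_subset hc hBA)
    · rw [Finset.biUnion_insert, Finset.card_insert_of_notMem hcB]
      push_cast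
      linarith
  have hcount : (∑ c ∈ A, #((S * {c}) ∩ W) : ℝ) ≤ #W * #S := by
    exact_mod_cast sum_card_mul_singleton_inter_le S A W
  have hSpos : (0 : ℝ) < #S := by exact_mod_cast hS.card_pos
  have hsum := Finset.card_nsmul_le_sum A _ _ hoverlap
  rw [nsmul_eq_mul] at hsum
  refine le_of_mul_le_mul_right ?_ hSpos
  linarith

/-- The tile of scale `p.2` centred at `p.1`, a right translate of `F p.2`. -/
def tile (F : ℕ → Finset G) (p : G × ℕ) : Finset G :=
  F p.2 * {p.1}

lemma card_tile (F : ℕ → Finset G) (p : G × ℕ) : #(tile F p) = #(F p.2) :=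
  Finset.card_mul_singleton _ _

/-- The set `⋃_{k<n} F_k⁻¹ F_n` of the tempered condition: the centres of the smaller tiles that
meet `F n`. -/
def temperedHull (F : ℕ → Finset G) (n : ℕ) : Finset G :=
  (Finset.range n).biUnion fun k => (F k)⁻¹ * F n

variable {F : ℕ → Finset G}

lemma IsTemperedSeq.exists_card_temperedHull_le (hF : IsTemperedSeq F) :
    ∃ C : ℝ, 0 < C ∧ ∀ n, (#(temperedHull F n) : ℝ) ≤ C * #(F n) := by
  obtain ⟨C, hC, h⟩ := hF
  refine ⟨C, hC, fun n => le_of_eq_of_le ?_ (h n)⟩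
  rw [← Set.ncard_coe_finset, temperedHull]
  simp

lemma mem_tile_temperedHull {k : ℕ} {c g : G} {p : G × ℕ} (hk : k < p.2) (hg : g ∈ tile F (c, k))
    (hg' : g ∈ tile F p) : c ∈ tile (temperedHull F) p := by
  rw [tile, mem_mul_singleton_iff_div_mem] at hg hg' ⊢
  refine Finset.mem_biUnion.2 ⟨k, Finset.mem_range.2 hk, ?_⟩
  simpa using Finset.mul_mem_mul (Finset.inv_mem_inv hg) hg'

lemma disjoint_biUnion_tile {k : ℕ} {sel : Finset (G × ℕ)} (hk : ∀ p ∈ sel, k < p.2)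
    {B : Finset G} (hB : Disjoint B (sel.biUnion (tile (temperedHull F)))) :
    Disjoint (sel.biUnion (tile F)) (B.biUnion fun c => tile F (c, k)) := by
  refine Finset.disjoint_left.2 fun g hg hgB => ?_
  obtain ⟨p, hp, hgp⟩ := Finset.mem_biUnion.1 hg
  obtain ⟨c, hc, hgc⟩ := Finset.mem_biUnion.1 hgB
  exact Finset.disjoint_left.1 hB hc
    (Finset.mem_biUnion.2 ⟨p, hp, mem_tile_temperedHull (hk p hp) hgc hgp⟩)

/-- Scales are treated in decreasing order, so that the tiles of scale `a` only need to avoid the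
tempered hulls of the tiles chosen before. -/
lemma exists_tiles_card_biUnion_sdiff_le (A : ℕ → Finset G) {θ : ℝ} (hθ₀ : 0 ≤ θ) (hθ₁ : θ ≤ 1)
    {a b : ℕ} (hab : a ≤ b) (hne : ∀ n, a ≤ n → (F n).Nonempty) :
    ∃ sel : Finset (G × ℕ), (∀ p ∈ sel, p.2 ∈ Finset.Ico a b ∧ p.1 ∈ A p.2) ∧
      (1 - θ) * ∑ p ∈ sel, (#(F p.2) : ℝ) ≤ #(sel.biUnion (tile F)) ∧
      θ * #((Finset.Ico a b).biUnion A \ sel.biUnion (tile (temperedHull F))) ≤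
        #(sel.biUnion (tile F)) := by
  induction hab using Nat.decreasingInduction with
  | self => exact ⟨∅, by simp, by simp, by simp⟩
  | of_succ a hab ih =>
    obtain ⟨sel, hsel, hsum, hcover⟩ := ih fun n hn => hne n (Nat.le_of_succ_le hn)
    set hull := sel.biUnion (tile (temperedHull F))
    obtain ⟨B, hBA, hBsum, hBcover⟩ :=
      exists_subset_card_biUnion_mul_singleton (hne a le_rfl) (A a \ hull) hθ₁
    have hscale : ∀ p ∈ sel, a < p.2 := fun p hp => (Finset.mem_Ico.1 (hsel p hp).1).1
    have hnew : Disjoint sel (B ×ˢ {a}) := Finset.disjoint_left.2 fun p hp hpB =>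
      (hscale p hp).ne' (Finset.mem_singleton.1 (Finset.mem_product.1 hpB).2)
    have hprod : B ×ˢ {a} = B.image fun c => (c, a) := Finset.product_singleton.trans
      (Finset.map_eq_image _ _)
    have hcard : (#((sel ∪ B ×ˢ {a}).biUnion (tile F)) : ℝ) =
        #(sel.biUnion (tile F)) + #(B.biUnion fun c => F a * {c}) := by
      rw [Finset.union_biUnion, hprod, Finset.image_biUnion, Finset.card_union_of_disjoint]
      · exact Nat.cast_add _ _
      · exact disjoint_biUnion_tile hscale (Finset.disjoint_of_subset_left hBA
          Finset.sdiff_disjoint)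
    refine ⟨sel ∪ B ×ˢ {a}, fun p hp => ?_, ?_, ?_⟩
    · rcases Finset.mem_union.1 hp with hp | hp
      · exact ⟨Finset.Ico_subset_Ico_left a.le_succ (hsel p hp).1, (hsel p hp).2⟩
      · obtain ⟨hpB, hpa⟩ := Finset.mem_product.1 hp
        rw [Finset.mem_singleton.1 hpa]
        exact ⟨Finset.left_mem_Ico.2 hab, (Finset.mem_sdiff.1 (hBA hpB)).1⟩
    · rw [hcard, Finset.sum_union hnew, Finset.sum_product]
      simp only [Finset.sum_singleton, Finset.sum_const, nsmul_eq_mul]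
      linarith
    · have hsub : (Finset.Ico a b).biUnion A \
          (sel ∪ B ×ˢ {a}).biUnion (tile (temperedHull F)) ⊆
          ((Finset.Ico (a + 1) b).biUnion A \ hull) ∪ (A a \ hull) := by
        rw [Finset.union_biUnion, ← Finset.union_sdiff_distrib, Finset.union_comm _ (A a),
          ← Finset.biUnion_insert, Finset.insert_Ico_add_one_left_eq_Ico hab]
        exact Finset.sdiff_subset_sdiff subset_rfl Finset.subset_union_left
      have hle : (#((Finset.Ico a b).biUnion A \
          (sel ∪ B ×ˢ {a}).biUnion (tile (temperedHull F))) : ℝ) ≤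
          #((Finset.Ico (a + 1) b).biUnion A \ hull) + #(A a \ hull) := by
        exact_mod_cast (Finset.card_le_card hsub).trans (Finset.card_union_le _ _)
      rw [hcard]
      linarith [mul_le_mul_of_nonneg_left hle hθ₀]

theorem exists_tiles_card_biUnion_le (A : ℕ → Finset G) {θ C : ℝ} (hθ₀ : 0 < θ) (hθ₁ : θ < 1)
    (hC₀ : 0 ≤ C) (hC : ∀ n, (#(temperedHull F n) : ℝ) ≤ C * #(F n)) {a b : ℕ} (hab : a ≤ b)
    (hne : ∀ n, a ≤ n → (F n).Nonempty) :
    ∃ sel : Finset (G × ℕ), (∀ p ∈ sel, p.2 ∈ Finset.Ico a b ∧ p.1 ∈ A p.2) ∧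
      (1 - θ) * ∑ p ∈ sel, (#(F p.2) : ℝ) ≤ #(sel.biUnion (tile F)) ∧
      #((Finset.Ico a b).biUnion A) ≤ (1 / θ + C / (1 - θ)) * #(sel.biUnion (tile F)) := by
  obtain ⟨sel, hsel, hsum, hcover⟩ :=
    exists_tiles_card_biUnion_sdiff_le A hθ₀.le hθ₁.le hab hne
  refine ⟨sel, hsel, hsum, ?_⟩
  set hull := sel.biUnion (tile (temperedHull F))
  set U := sel.biUnion (tile F)
  have hhull : (#hull : ℝ) ≤ C * (#U / (1 - θ)) :=
    calc (#hull : ℝ) ≤ ∑ p ∈ sel, (#(temperedHull F p.2) : ℝ) := by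
          refine mod_cast Finset.card_biUnion_le.trans_eq (Finset.sum_congr rfl fun p _ => ?_)
          exact card_tile _ p
      _ ≤ ∑ p ∈ sel, C * (#(F p.2) : ℝ) := Finset.sum_le_sum fun p _ => hC p.2
      _ = C * ∑ p ∈ sel, (#(F p.2) : ℝ) := (Finset.mul_sum _ _ _).symm
      _ ≤ C * (#U / (1 - θ)) := by
          gcongr
          rwa [le_div_iff₀' (sub_pos.2 hθ₁)]
  have hrest : (#((Finset.Ico a b).biUnion A \ hull) : ℝ) ≤ #U / θ := by
    rwa [le_div_iff₀' hθ₀]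
  calc (#((Finset.Ico a b).biUnion A) : ℝ)
      ≤ #((Finset.Ico a b).biUnion A \ hull) + #hull := by
        exact_mod_cast Finset.card_le_card_sdiff_add_card
    _ ≤ #U / θ + C * (#U / (1 - θ)) := add_le_add hrest hhull
    _ = (1 / θ + C / (1 - θ)) * #U := by ring

end TemperedCovering

/-! ### Codebooks from Bowen balls -/

section Lusin

open Metric

variable [PseudoMetricSpace X] [MeasurableSpace X] [BorelSpace X] (μ : Measure X)
  [IsFiniteMeasure μ]

lemma exists_isClosed_eventually_measure_union_le {s : Set X} (hs : MeasurableSet s) {ε : ℝ≥0∞}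
    (hε : ε ≠ 0) :
    ∃ C, IsClosed C ∧ ∀ᶠ δ in 𝓝[>] (0 : ℝ), μ (s \ C ∪ thickening δ C \ s) ≤ ε := by
  have hε₂ : ε / 2 ≠ 0 := (ENNReal.half_pos hε).ne'
  obtain ⟨C, hCs, hC, hdiff⟩ := hs.exists_isClosed_sdiff_lt (measure_ne_top μ s) hε₂
  refine ⟨C, hC, ?_⟩
  have hlim := tendsto_measure_thickening_of_isClosed ⟨1, one_pos, measure_ne_top μ _⟩ hC
  filter_upwards [hlim.eventually_lt_const (ENNReal.lt_add_right (measure_ne_top μ C) hε₂),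
    self_mem_nhdsWithin] with δ hδ hδ₀
  have hthick : μ (thickening δ C \ C) ≤ ε / 2 := by
    rw [measure_sdiff (self_subset_thickening hδ₀ C) hC.measurableSet.nullMeasurableSet
      (measure_ne_top μ C)]
    exact tsub_le_iff_left.2 hδ.le
  calc μ (s \ C ∪ thickening δ C \ s) ≤ μ (s \ C) + μ (thickening δ C \ C) :=
        (measure_union_le _ _).trans (by gcongr)
    _ ≤ ε / 2 + ε / 2 := add_le_add hdiff.le hthick
    _ = ε := ENNReal.add_halves ε

variable {α : Type*} [MeasurableSpace α] [MeasurableSingletonClass α]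

lemma exists_forall_dist_lt_imp_eq [Finite α] {ι : X → α} (hι : Measurable ι) {ε : ℝ≥0∞}
    (hε : ε ≠ 0) :
    ∃ bad : Set X, MeasurableSet bad ∧ μ bad ≤ ε ∧
      ∃ δ > 0, ∀ y ∉ bad, ∀ y' ∉ bad, dist y y' < δ → ι y = ι y' := by
  cases nonempty_fintype α
  have hfiber (i : α) : MeasurableSet (ι ⁻¹' {i}) := hι (measurableSet_singleton i)
  have hε' : ε / Fintype.card α ≠ 0 := (ENNReal.div_pos hε (natCast_ne_top _)).ne'
  choose C hC hsmall using fun i =>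
    exists_isClosed_eventually_measure_union_le μ (hfiber i) hε'
  obtain ⟨δ, hδ, hδ₀⟩ := ((eventually_all.2 hsmall).and self_mem_nhdsWithin).exists
  refine ⟨⋃ i, (ι ⁻¹' {i} \ C i ∪ thickening δ (C i) \ ι ⁻¹' {i}), MeasurableSet.iUnion fun i =>
    ((hfiber i).diff (hC i).measurableSet).union (isOpen_thickening.measurableSet.diff (hfiber i)),
    ?_, δ, hδ₀, fun y hy y' hy' hdist => ?_⟩
  · calc μ (⋃ i, (ι ⁻¹' {i} \ C i ∪ thickening δ (C i) \ ι ⁻¹' {i}))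
        ≤ ∑ _i : α, ε / Fintype.card α :=
          (measure_iUnion_fintype_le μ _).trans (Finset.sum_le_sum fun i _ => hδ i)
      _ ≤ ε := by
        rw [Finset.sum_const, Finset.card_univ, nsmul_eq_mul]
        exact ENNReal.mul_div_le
  · rw [mem_iUnion, not_exists] at hy hy'
    have hyC : y ∈ C (ι y) := by_contra fun hyC => hy (ι y) (Or.inl ⟨rfl, hyC⟩)
    by_contra hne
    refine hy' (ι y) (Or.inr ⟨mem_thickening_iff.2 ⟨y, hyC, ?_⟩, Ne.symm hne⟩)
    rwa [dist_comm]

lemma exists_forall_exists_decode [Finite α] {ι : X → α} (hι : Measurable ι) {ε : ℝ≥0∞}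
    (hε : ε ≠ 0) :
    ∃ bad : Set X, MeasurableSet bad ∧ μ bad ≤ ε ∧
      ∃ δ > 0, ∀ p, ∃ i, ∀ y ∉ bad, dist p y < δ → ι y = i := by
  obtain ⟨bad, hbad, hμ, δ, hδ, heq⟩ := exists_forall_dist_lt_imp_eq μ hι hε
  refine ⟨bad, hbad, hμ, δ / 2, half_pos hδ, fun p => ?_⟩
  by_cases hp : ∃ y₀ ∉ bad, dist p y₀ < δ / 2
  · obtain ⟨y₀, hy₀, hd₀⟩ := hp
    exact ⟨ι y₀, fun y hy hd => heq y hy y₀ hy₀ (by linarith [dist_triangle_left y y₀ p])⟩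
  · exact ⟨ι p, fun y hy hd => (hp ⟨y, hy, hd⟩).elim⟩

end Lusin

section Codebook

open scoped Finset

variable [Group G] [MetricSpace X] [MulAction G X]

lemma isOpen_bowenBall [ContinuousConstSMul G X] (S : Finset G) (x : X) (ε : ℝ) :
    IsOpen (bowenBall S x ε) := by
  simp only [bowenBall, ofPred_forall]
  exact isOpen_biInter_finset fun g _ =>
    isOpen_lt (continuous_const.dist (continuous_const_smul g)) continuous_const

lemma mem_bowenBall_add_of_nonempty_inter {S : Finset G} {x z : X} {δ ε : ℝ}
    (h : (bowenBall S x δ ∩ bowenBall S z ε).Nonempty) : x ∈ bowenBall S z (δ + ε) := by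
  obtain ⟨y, hxy, hzy⟩ := h
  intro g hg
  linarith [hxy g hg, hzy g hg, dist_triangle_right (g • z) (g • x) (g • y)]

lemma mem_bowenBall_self (S : Finset G) (x : X) {ε : ℝ} (hε : 0 < ε) : x ∈ bowenBall S x ε :=
  fun g _ => by rwa [dist_self]

variable [ContinuousConstSMul G X] [MeasurableSpace X] [BorelSpace X] (μ : Measure X)

lemma exists_finset_subset_biUnion_bowenBall [IsFiniteMeasure μ] (S : Finset G) {δ : ℝ}
    (hδ : 0 < δ) {t : ℝ≥0∞} (ht : t ≠ 0) :
    ∃ Z : Finset X, #Z * t ≤ μ univ ∧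
      {x | t ≤ μ (bowenBall S x δ)} ⊆ ⋃ z ∈ Z, bowenBall S z (δ + δ) := by
  have hmeas (z : X) : MeasurableSet (bowenBall S z δ) := (isOpen_bowenBall S z δ).measurableSet
  obtain ⟨Z, hZ, hdisj, hcov⟩ := Vitali.exists_disjoint_subfamily_covering_enlargement
    (bowenBall S · δ) {x | t ≤ μ (bowenBall S x δ)} (fun _ => 1) 2 one_lt_two
    (fun _ _ => zero_le_one) 1 (fun _ _ => le_rfl) fun x _ => ⟨x, mem_bowenBall_self S x hδ⟩
  have hfin : Z.Finite := by
    have := Measure.finite_const_le_meas_of_disjoint_iUnion μ (pos_iff_ne_zero.2 ht)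
      (fun z : Z => hmeas z) hdisj.subtype (measure_ne_top μ _)
    exact finite_coe_iff.1 (finite_univ_iff.1 (this.subset fun z _ => hZ z.2))
  lift Z to Finset X using hfin
  refine ⟨Z, ?_, fun x hx => ?_⟩
  · calc #Z * t = ∑ _z ∈ Z, t := by rw [Finset.sum_const, nsmul_eq_mul]
      _ ≤ ∑ z ∈ Z, μ (bowenBall S z δ) := Finset.sum_le_sum fun z hz => hZ hz
      _ = μ (⋃ z ∈ Z, bowenBall S z δ) :=
        (measure_biUnion_finset hdisj fun z _ => hmeas z).symm
      _ ≤ μ univ := measure_mono (subset_univ _)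
  · obtain ⟨z, hz, hxz, -⟩ := hcov x hx
    exact mem_biUnion hz (mem_bowenBall_add_of_nonempty_inter hxz)

variable {α : Type*}

/-- `𝒞` lists the itineraries over `S` of the points of `A`, up to errors at the times when the
orbit visits `bad`. -/
def IsCodebook (ι : X → α) (bad : Set X) (S : Finset G) (A : Set X) (𝒞 : Finset (G → α)) : Prop :=
  ∀ y ∈ A, ∃ w ∈ 𝒞, ∀ f ∈ S, f • y ∉ bad → ι (f • y) = w f

lemma exists_isCodebook_bowenBall [IsFiniteMeasure μ] {ι : X → α} {bad : Set X} {δ : ℝ}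
    (hdecode : ∀ p, ∃ i, ∀ y ∉ bad, dist p y < δ + δ → ι y = i) (hδ : 0 < δ) (S : Finset G)
    {t : ℝ≥0∞} (ht : t ≠ 0) :
    ∃ (𝒞 : Finset (G → α)) (A : Set X), #𝒞 * t ≤ μ univ ∧ IsOpen A ∧
      {x | t ≤ μ (bowenBall S x δ)} ⊆ A ∧ IsCodebook ι bad S A 𝒞 := by
  classical
  choose decode hdecode using hdecode
  obtain ⟨Z, hcard, hcov⟩ := exists_finset_subset_biUnion_bowenBall μ S hδ ht
  refine ⟨Z.image fun z f => decode (f • z), ⋃ z ∈ Z, bowenBall S z (δ + δ), ?_,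
    isOpen_biUnion fun z _ => isOpen_bowenBall S z _, hcov, fun y hy => ?_⟩
  · exact le_trans (by gcongr; exact Finset.card_image_le) hcard
  · obtain ⟨z, hz, hyz⟩ := mem_iUnion₂.1 hy
    exact ⟨_, Finset.mem_image_of_mem _ hz, fun f hf hbad => hdecode _ _ hbad (hyz f hf)⟩

end Codebook

/-! ### Describing an orbit segment by tiles and corrections -/

section Boundary

open scoped Finset

variable [Group G] [DecidableEq G]

lemma card_shiftBoundary_sdiff_le (g : G) (W U : Finset G) :
    #(shiftBoundary g (W \ U)) ≤ #(shiftBoundary g W) + #(shiftBoundary g⁻¹ U) := by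
  have hsub : shiftBoundary g (W \ U) ⊆
      shiftBoundary g W ∪ (shiftBoundary g⁻¹ U).image (g⁻¹ * ·) := by
    intro v hv
    simp only [shiftBoundary, Finset.mem_filter, Finset.mem_sdiff] at hv
    obtain ⟨⟨hvW, hvU⟩, hgv⟩ := hv
    by_cases hgW : g * v ∈ W
    · refine Finset.mem_union_right _ (Finset.mem_image.2 ⟨g * v, ?_, inv_mul_cancel_left g v⟩)
      refine Finset.mem_filter.2 ⟨by_contra fun hgU => hgv ⟨hgW, hgU⟩, ?_⟩
      rwa [inv_mul_cancel_left]
    · exact Finset.mem_union_left _ (Finset.mem_filter.2 ⟨hvW, hgW⟩)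
  exact (Finset.card_le_card hsub).trans ((Finset.card_union_le _ _).trans
    (Nat.add_le_add_left Finset.card_image_le _))

lemma card_shiftBoundary_biUnion_le {T : Type*} (g : G) (s : Finset T) (f : T → Finset G) :
    #(shiftBoundary g (s.biUnion f)) ≤ ∑ t ∈ s, #(shiftBoundary g (f t)) := by
  refine (Finset.card_le_card fun v hv => ?_).trans Finset.card_biUnion_le
  obtain ⟨hvs, hgv⟩ := Finset.mem_filter.1 hv
  obtain ⟨t, ht, hvt⟩ := Finset.mem_biUnion.1 hvs
  exact Finset.mem_biUnion.2 ⟨t, ht, Finset.mem_filter.2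
    ⟨hvt, fun hgt => hgv (Finset.mem_biUnion.2 ⟨t, ht, hgt⟩)⟩⟩

lemma card_shiftBoundary_mul_singleton (g c : G) (S : Finset G) :
    #(shiftBoundary g (S * {c})) = #(shiftBoundary g S) := by
  have himage : shiftBoundary g (S * {c}) = shiftBoundary g S * {c} := by
    ext v
    simp only [shiftBoundary, Finset.mem_filter, mem_mul_singleton_iff_div_mem, mul_div_assoc]
  rw [himage, Finset.card_mul_singleton]

lemma mul_sum_card_shiftBoundary_sdiff_tiles_le {F : ℕ → Finset G} {W : Finset G}
    {sel : Finset (G × ℕ)} {T : Type*} {s : Finset T} {c : T → G} {M η : ℝ} (hM : 0 ≤ M)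
    (hW : M * ∑ t ∈ s, (#(shiftBoundary (c t) W) : ℝ) ≤ η * #W)
    (hsel : ∀ p ∈ sel,
      M * ∑ t ∈ s, (#(shiftBoundary (c t)⁻¹ (F p.2)) : ℝ) ≤ η * #(F p.2)) :
    M * ∑ t ∈ s, (#(shiftBoundary (c t) (W \ sel.biUnion (tile F))) : ℝ) ≤
      η * (#W + ∑ p ∈ sel, (#(F p.2) : ℝ)) := by
  have hle (t : T) : (#(shiftBoundary (c t) (W \ sel.biUnion (tile F))) : ℝ) ≤
      #(shiftBoundary (c t) W) + ∑ p ∈ sel, (#(shiftBoundary (c t)⁻¹ (F p.2)) : ℝ) := by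
    refine mod_cast (card_shiftBoundary_sdiff_le _ _ _).trans (Nat.add_le_add_left
      ((card_shiftBoundary_biUnion_le _ _ _).trans_eq (Finset.sum_congr rfl fun p _ => ?_)) _)
    exact card_shiftBoundary_mul_singleton _ _ _
  calc M * ∑ t ∈ s, (#(shiftBoundary (c t) (W \ sel.biUnion (tile F))) : ℝ)
      ≤ M * ∑ t ∈ s, (#(shiftBoundary (c t) W) +
          ∑ p ∈ sel, (#(shiftBoundary (c t)⁻¹ (F p.2)) : ℝ)) := by
        gcongr with t
        exact hle t
    _ = M * ∑ t ∈ s, (#(shiftBoundary (c t) W) : ℝ) +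
          ∑ p ∈ sel, M * ∑ t ∈ s, (#(shiftBoundary (c t)⁻¹ (F p.2)) : ℝ) := by
        rw [Finset.sum_add_distrib, mul_add, Finset.sum_comm, Finset.mul_sum (s := sel)]
    _ ≤ η * #W + ∑ p ∈ sel, η * #(F p.2) := add_le_add hW (Finset.sum_le_sum hsel)
    _ = η * (#W + ∑ p ∈ sel, (#(F p.2) : ℝ)) := by rw [← Finset.mul_sum, mul_add]

/-- The centres of the discarded tiles, which stick out of `W`, lie in the boundary of `W`. -/
lemma exists_tiles_subset_card_biUnion_le {F : ℕ → Finset G} {W : Finset G} (A : ℕ → Finset G)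
    (hA : ∀ n, A n ⊆ W) {θ C : ℝ} (hθ₀ : 0 < θ) (hθ₁ : θ < 1) (hC₀ : 0 ≤ C)
    (hC : ∀ n, (#(temperedHull F n) : ℝ) ≤ C * #(F n)) {a b : ℕ} (hab : a ≤ b)
    (hne : ∀ n, a ≤ n → (F n).Nonempty) :
    ∃ sel : Finset (G × ℕ),
      (∀ p ∈ sel, p.2 ∈ Finset.Ico a b ∧ p.1 ∈ A p.2 ∧ tile F p ⊆ W) ∧
      (1 - θ) * ∑ p ∈ sel, (#(F p.2) : ℝ) ≤ #(sel.biUnion (tile F)) ∧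
      #((Finset.Ico a b).biUnion A) ≤ (1 / θ + C / (1 - θ)) * #(sel.biUnion (tile F)) +
        ∑ f ∈ (Finset.Ico a b).biUnion F, (#(shiftBoundary f W) : ℝ) := by
  set inside : ℕ → Finset G := fun n => {c ∈ A n | tile F (c, n) ⊆ W}
  obtain ⟨sel, hsel, hsum, hcover⟩ := exists_tiles_card_biUnion_le inside hθ₀ hθ₁ hC₀ hC hab hne
  refine ⟨sel, fun p hp => ⟨(hsel p hp).1, Finset.mem_filter.1 (hsel p hp).2⟩, hsum, ?_⟩
  have hsub : (Finset.Ico a b).biUnion A ⊆ (Finset.Ico a b).biUnion inside ∪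
      ((Finset.Ico a b).biUnion F).biUnion fun f => shiftBoundary f W := by
    intro c hc
    obtain ⟨n, hn, hcA⟩ := Finset.mem_biUnion.1 hc
    by_cases hin : tile F (c, n) ⊆ W
    · exact Finset.mem_union_left _
        (Finset.mem_biUnion.2 ⟨n, hn, Finset.mem_filter.2 ⟨hcA, hin⟩⟩)
    · obtain ⟨g, hg, hgW⟩ := Finset.not_subset.1 hin
      rw [tile, mem_mul_singleton_iff_div_mem] at hg
      refine Finset.mem_union_right _ (Finset.mem_biUnion.2 ⟨g / c,
        Finset.mem_biUnion.2 ⟨n, hn, hg⟩, Finset.mem_filter.2 ⟨hA n hcA, ?_⟩⟩)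
      rwa [div_mul_cancel]
  have hcard : (#((Finset.Ico a b).biUnion A) : ℝ) ≤ #((Finset.Ico a b).biUnion inside) +
      ∑ f ∈ (Finset.Ico a b).biUnion F, (#(shiftBoundary f W) : ℝ) := by
    exact_mod_cast (Finset.card_le_card hsub).trans ((Finset.card_union_le _ _).trans
      (Nat.add_le_add_left Finset.card_biUnion_le _))
  linarith

end Boundary

section Description

open scoped Finset

/-- The data describing an itinerary on a window: a set of tiles, each with a codeword (as a
function on the corresponding `F n`), and a set of corrections, each a time with a label. -/
abbrev Description (G α : Type*) :=
  Finset (Σ _ : G × ℕ, G → α) × Finset (G × α)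

variable {α : Type*} {F : ℕ → Finset G} {s lam : ℝ}

/-- The length (in nats) of a description, at rate `s` per unit of tile size and `lam` per
correction. -/
def descriptionLength (F : ℕ → Finset G) (s lam : ℝ) (D : Description G α) : ℝ :=
  ∑ q ∈ D.1, s * #(F q.1.2) + ∑ _c ∈ D.2, lam

/-- The descriptions with tiles centred in `W` at scales in `[a, b)` and codewords in `𝒞`. -/
def descriptions [Fintype α] (W : Finset G) (𝒞 : ℕ → Finset (G → α)) (a b : ℕ) :
    Finset (Description G α) :=
  ((W ×ˢ Finset.Ico a b).sigma fun p => 𝒞 p.2).powerset ×ˢ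
    (W ×ˢ (Finset.univ : Finset α)).powerset

lemma sum_powerset_exp_neg_sum_le {T : Type*} (Ω : Finset T) (ℓ : T → ℝ) :
    ∑ A ∈ Ω.powerset, Real.exp (-∑ t ∈ A, ℓ t) ≤ Real.exp (∑ t ∈ Ω, Real.exp (-ℓ t)) := by
  classical
  calc ∑ A ∈ Ω.powerset, Real.exp (-∑ t ∈ A, ℓ t) = ∏ t ∈ Ω, (1 + Real.exp (-ℓ t)) := by
        rw [Finset.prod_one_add]
        simp only [← Finset.sum_neg_distrib, Real.exp_sum]
    _ ≤ ∏ t ∈ Ω, Real.exp (Real.exp (-ℓ t)) :=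
        Finset.prod_le_prod (fun t _ => by positivity) fun t _ => by
          rw [add_comm]; exact Real.add_one_le_exp _
    _ = Real.exp (∑ t ∈ Ω, Real.exp (-ℓ t)) := (Real.exp_sum _ _).symm

lemma sum_exp_neg_descriptionLength_le [Fintype α] (W : Finset G) (𝒞 : ℕ → Finset (G → α))
    (a b : ℕ) :
    ∑ D ∈ descriptions W 𝒞 a b, Real.exp (-descriptionLength F s lam D) ≤
      Real.exp (#W * (∑ n ∈ Finset.Ico a b, #(𝒞 n) * Real.exp (-(s * #(F n))) +
        Fintype.card α * Real.exp (-lam))) := by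
  simp only [descriptions, descriptionLength, neg_add, Real.exp_add, Finset.sum_product]
  rw [← Finset.sum_mul_sum]
  refine (mul_le_mul (sum_powerset_exp_neg_sum_le _ _) (sum_powerset_exp_neg_sum_le _ _)
    (by positivity) (by positivity)).trans_eq ?_
  rw [← Real.exp_add, Finset.sum_sigma, Finset.sum_product]
  simp only [Finset.sum_const, Finset.card_product, Finset.card_univ, nsmul_eq_mul, Nat.cast_mul]
  ring_nf

variable [Group G] [MulAction G X]

open scoped Classical in
/-- The times in `S` at which the orbit of `x` is in `E`. -/
noncomputable def visitTimes (S : Finset G) (E : Set X) (x : X) : Finset G := {g ∈ S | g • x ∈ E}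

lemma mem_visitTimes {S : Finset G} {E : Set X} {x : X} {g : G} :
    g ∈ visitTimes S E x ↔ g ∈ S ∧ g • x ∈ E := by
  simp only [visitTimes, Finset.mem_filter]

lemma card_visitTimes (S : Finset G) (E : Set X) (x : X) :
    (#(visitTimes S E x) : ℝ) = ∑ g ∈ S, E.indicator 1 (g • x) := by
  classical
  simp only [visitTimes, ← Finset.sum_boole, indicator_apply, Pi.one_apply]

variable [DecidableEq G] {ι : X → α} {bad : Set X} {W : Finset G}

/-- `D` describes the itinerary of `x` on the tiles of `D` inside `W`: the codewords are correct
outside the visit times to `bad`, and the corrections are the labels at the visit times. -/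
def Describes (F : ℕ → Finset G) (ι : X → α) (bad : Set X) (W : Finset G) (D : Description G α)
    (x : X) : Prop :=
  (∀ q ∈ D.1, ∀ g ∈ tile F q.1, g • x ∉ bad → itinerary ι x g = q.2 (g / q.1.1)) ∧
    ∀ c, c ∈ D.2 ↔ c.1 ∈ visitTimes W bad x ∧ itinerary ι x c.1 = c.2

/-- The set of times covered by the tiles of a description. -/
def coveredTimes (F : ℕ → Finset G) (D : Description G α) : Finset G :=
  D.1.biUnion fun q => tile F q.1

lemma eqOn_itinerary_of_describes {D : Description G α} {x y : X}
    (hx : Describes F ι bad W D x) (hy : Describes F ι bad W D y) :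
    EqOn (itinerary ι x) (itinerary ι y)
      ((W ∩ coveredTimes F D : Finset G) : Set G) := by
  intro g hg
  obtain ⟨hgW, hgD⟩ := Finset.mem_inter.1 hg
  by_cases hgx : g • x ∈ bad
  · exact (((hy.2 _).1 ((hx.2 (g, itinerary ι x g)).2 ⟨mem_visitTimes.2 ⟨hgW, hgx⟩, rfl⟩)).2).symm
  by_cases hgy : g • y ∈ bad
  · exact ((hx.2 _).1 ((hy.2 (g, itinerary ι y g)).2 ⟨mem_visitTimes.2 ⟨hgW, hgy⟩, rfl⟩)).2
  obtain ⟨q, hq, hgq⟩ := Finset.mem_biUnion.1 hgD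
  rw [hx.1 q hq g hgq hgx, hy.1 q hq g hgq hgy]

lemma exists_describes [Fintype α] {A : ℕ → Set X} {𝒞 : ℕ → Finset (G → α)}
    (h𝒞 : ∀ n, IsCodebook ι bad (F n) (A n) (𝒞 n)) {a b : ℕ} {sel : Finset (G × ℕ)} {x : X}
    (hsel : ∀ p ∈ sel, p.2 ∈ Finset.Ico a b ∧ p.1 ∈ visitTimes W (A p.2) x) (s lam : ℝ) :
    ∃ D ∈ descriptions W 𝒞 a b, Describes F ι bad W D x ∧
      coveredTimes F D = sel.biUnion (tile F) ∧
      descriptionLength F s lam D =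
        s * ∑ p ∈ sel, (#(F p.2) : ℝ) + lam * #(visitTimes W bad x) := by
  classical
  have hword : ∀ p ∈ sel, ∃ w ∈ 𝒞 p.2, ∀ f ∈ F p.2, f • p.1 • x ∉ bad →
      ι (f • p.1 • x) = w f := fun p hp => h𝒞 p.2 (p.1 • x) (mem_visitTimes.1 (hsel p hp).2).2
  have : Nonempty α := ⟨ι x⟩
  choose! w hw𝒞 hw using hword
  set word : G × ℕ → Σ _ : G × ℕ, G → α := fun p => ⟨p, w p⟩
  set correction : G → G × α := fun g => (g, itinerary ι x g)
  have hword_inj : word.Injective := fun p p' h => congrArg Sigma.fst h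
  have hcorr_inj : correction.Injective := fun g g' h => congrArg Prod.fst h
  refine ⟨(sel.image word, (visitTimes W bad x).image correction),
    Finset.mem_product.2 ⟨Finset.mem_powerset.2 ?_, Finset.mem_powerset.2 ?_⟩, ⟨?_, fun c => ?_⟩,
    Finset.image_biUnion, ?_⟩
  · refine Finset.image_subset_iff.2 fun p hp => Finset.mem_sigma.2 ⟨?_, hw𝒞 p hp⟩
    exact Finset.mem_product.2 ⟨(mem_visitTimes.1 (hsel p hp).2).1, (hsel p hp).1⟩
  · exact Finset.image_subset_iff.2 fun g hg =>
      Finset.mem_product.2 ⟨(mem_visitTimes.1 hg).1, Finset.mem_univ _⟩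
  · refine Finset.forall_mem_image.2 fun p hp g hg hbad => ?_
    have hgx : (g / p.1) • p.1 • x = g • x := by rw [smul_smul, div_mul_cancel]
    rw [itinerary, ← hgx]
    exact hw p hp _ (mem_mul_singleton_iff_div_mem.1 hg) (by rwa [hgx])
  · simp [correction, Prod.ext_iff, and_comm]
  · simp only [descriptionLength, Finset.sum_image hword_inj.injOn,
      Finset.sum_image hcorr_inj.injOn, Finset.mul_sum, Finset.sum_const, nsmul_eq_mul, word]
    rw [mul_comm lam]

end Description

/-! ### Counting descriptions of typical points -/

section Saving

open scoped Finset

lemma sum_le_mul_card_add_sum_max {T : Type*} {V W : Finset T} (hVW : V ⊆ W) (f : T → ℝ) (h : ℝ) :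
    ∑ v ∈ V, f v ≤ h * #V + ∑ w ∈ W, max (f w - h) 0 := by
  calc ∑ v ∈ V, f v ≤ ∑ v ∈ V, (h + max (f v - h) 0) :=
        Finset.sum_le_sum fun v _ => sub_le_iff_le_add'.1 (le_max_left _ _)
    _ = h * #V + ∑ v ∈ V, max (f v - h) 0 := by
        rw [Finset.sum_add_distrib, Finset.sum_const, nsmul_eq_mul, mul_comm]
    _ ≤ h * #V + ∑ w ∈ W, max (f w - h) 0 := by
        gcongr

lemma mul_le_mul_of_saving {ρ η δ γ u w : ℝ} (hρ : 0 < ρ) (hδ : 0 ≤ δ) (hw : 0 ≤ w)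
    (hγ : 18 * η * ρ ≤ δ * γ) (hu : γ / 2 * w ≤ ρ * u) : 9 * η * w ≤ δ * u := by
  refine le_of_mul_le_mul_left ?_ hρ
  calc ρ * (9 * η * w) = 18 * η * ρ / 2 * w := by ring
    _ ≤ δ * γ / 2 * w := by gcongr
    _ = δ * (γ / 2 * w) := by ring
    _ ≤ δ * (ρ * u) := by gcongr
    _ = ρ * (δ * u) := by ring

lemma exists_tiles_subset_le_card_biUnion [Group G] [DecidableEq G] [MulAction G X]
    {F : ℕ → Finset G} {W : Finset G} {A : ℕ → Set X} {x : X} {θ C γ : ℝ} (hθ₀ : 0 < θ)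
    (hθ₁ : θ < 1) (hC₀ : 0 ≤ C) (hC : ∀ n, (#(temperedHull F n) : ℝ) ≤ C * #(F n)) {a b : ℕ}
    (hab : a ≤ b) (hne : ∀ n, a ≤ n → (F n).Nonempty)
    (hWF : ∑ f ∈ (Finset.Ico a b).biUnion F, (#(shiftBoundary f W) : ℝ) ≤ γ / 2 * #W)
    (hvisit : γ * #W ≤ #(visitTimes W (⋃ n ∈ Finset.Ico a b, A n) x)) :
    ∃ sel : Finset (G × ℕ),
      (∀ p ∈ sel, p.2 ∈ Finset.Ico a b ∧ p.1 ∈ visitTimes W (A p.2) x ∧ tile F p ⊆ W) ∧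
      (1 - θ) * ∑ p ∈ sel, (#(F p.2) : ℝ) ≤ #(sel.biUnion (tile F)) ∧
      γ / 2 * #W ≤ (1 / θ + C / (1 - θ)) * #(sel.biUnion (tile F)) := by
  obtain ⟨sel, hsel, hsum, hcover⟩ := exists_tiles_subset_card_biUnion_le
    (fun n => visitTimes W (A n) x) (fun n g hg => (mem_visitTimes.1 hg).1) hθ₀ hθ₁ hC₀ hC hab hne
  have hunion : visitTimes W (⋃ n ∈ Finset.Ico a b, A n) x =
      (Finset.Ico a b).biUnion fun n => visitTimes W (A n) x := by
    ext g
    simp only [mem_visitTimes, mem_iUnion, Finset.mem_biUnion, exists_prop]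
    tauto
  rw [hunion] at hvisit
  exact ⟨sel, hsel, hsum, by linarith⟩

variable [Group G] [DecidableEq G] [MulAction G X] [MeasurableSpace X] {α : Type*} {ι : X → α}

/-- The excess over the rate `h` of the mean information on the block `K * {κ₀⁻¹}`. -/
noncomputable def excess (μ : Measure X) (ι : X → α) (K : Finset G) (κ₀ : G) (h : ℝ) (x : X) : ℝ :=
  max (information μ ι K (κ₀⁻¹ • x) / #K - h) 0

/-- A typical point for the window `W`: its orbit visits the coded set `E` with frequency at least
`γ`, visits `bad` so rarely that corrections of cost `lam` are affordable, has small total excess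
information on translates of `K`, and carries nearly the full information `h * #W`. -/
structure IsTypical (μ : Measure X) (ι : X → α) (K : Finset G) (κ₀ : G) (E bad : Set X)
    (h η γ lam : ℝ) (W : Finset G) (x : X) : Prop where
  le_card_visitTimes : γ * #W ≤ #(visitTimes W E x)
  card_visitTimes_bad_le : lam * #(visitTimes W bad x) ≤ η * #W
  sum_excess_le : ∑ w ∈ W, excess μ ι K κ₀ h (w • x) ≤ η * #W
  lt_information : (h - η) * #W < information μ ι W x

variable [MeasurableConstSMul G X] (μ : Measure X) [IsProbabilityMeasure μ]
  [SMulInvariantMeasure G X μ]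

/-- Describing `U` costs `ℓ`, which saves `δ` per unit compared with the information. -/
lemma cylinderMass_le_of_saving {K W U : Finset G} (hUW : U ⊆ W) {κ₀ : G} (hκ₀ : κ₀ ∈ K)
    {M h η δ ℓ : ℝ} (hM : ∀ x, information μ ι K x ≤ M)
    (hbdry : M * ∑ κ ∈ K, (#(shiftBoundary (κ₀ * κ⁻¹) (W \ U)) : ℝ) ≤ 3 * η * #W)
    (hℓ : ℓ ≤ (h - δ) * #U + η * #W) (hδ : 9 * η * #W ≤ δ * #U) {x : X}
    (hx : ∀ S : Finset G, cylinderMass μ ι S (itinerary ι x) ≠ 0)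
    (hexcess : ∑ w ∈ W, excess μ ι K κ₀ h (w • x) ≤ η * #W)
    (hinfo : (h - η) * #W < information μ ι W x) :
    cylinderMass μ ι W (itinerary ι x) ≤ ENNReal.ofReal (Real.exp (-(3 * η * #W + ℓ))) *
      codeWeight μ ι K (W \ U) (itinerary ι x) := by
  refine cylinderMass_le_exp_mul_codeWeight μ
    (exp_neg_le_codeWeight μ K (W \ U) hκ₀ hM hx) (hx W) ?_
  have hsum := sum_le_mul_card_add_sum_max (Finset.sdiff_subset : W \ U ⊆ W)
    (fun v => information μ ι K (κ₀⁻¹ • v • x) / #K) h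
  have hcard : (#(W \ U) : ℝ) = #W - #U := by
    rw [Finset.card_sdiff_of_subset hUW, Nat.cast_sub (Finset.card_le_card hUW)]
  rw [hcard] at hsum
  simp only [excess] at hexcess
  linarith

end Saving

section Descriptions

open scoped Finset

variable [Group G] [DecidableEq G] [MulAction G X] [MeasurableSpace X] [MeasurableConstSMul G X]
  (μ : Measure X) [IsProbabilityMeasure μ] {α : Type*} {ι : X → α} {F : ℕ → Finset G}
  {K W : Finset G} {κ₀ : G} {bad : Set X}

lemma measure_setOf_exists_describes_le [Finite α] [MeasurableSpace α] [MeasurableSingletonClass α]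
    (hι : Measurable ι) (hK : K.Nonempty) (𝒟 : Finset (Description G α))
    (ℓ : Description G α → ℝ) (r : ℝ) :
    μ {x | ∃ D ∈ 𝒟, Describes F ι bad W D x ∧ cylinderMass μ ι W (itinerary ι x) ≤
      ENNReal.ofReal (Real.exp (-(r + ℓ D))) *
        codeWeight μ ι K (W \ coveredTimes F D) (itinerary ι x)} ≤
      ENNReal.ofReal (Real.exp (-r) * ∑ D ∈ 𝒟, Real.exp (-ℓ D)) := by
  have hD (D : Description G α) := measure_setOf_cylinderMass_le_mul_codeWeight_le μ hι hK
    (Finset.sdiff_subset : W \ coveredTimes F D ⊆ W) {x | Describes F ι bad W D x}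
    (fun x hx y hy => by
      rw [Finset.sdiff_sdiff_self_left]
      exact eqOn_itinerary_of_describes hx hy)
    (ENNReal.ofReal (Real.exp (-(r + ℓ D))))
  calc _ = μ (⋃ D ∈ 𝒟, {x ∈ {x | Describes F ι bad W D x} | cylinderMass μ ι W (itinerary ι x) ≤
        ENNReal.ofReal (Real.exp (-(r + ℓ D))) *
          codeWeight μ ι K (W \ coveredTimes F D) (itinerary ι x)}) := by
        congr 1
        ext x
        simp only [mem_ofPred_eq, mem_iUnion, exists_prop]
    _ ≤ ∑ D ∈ 𝒟, ENNReal.ofReal (Real.exp (-(r + ℓ D))) :=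
        (measure_biUnion_finset_le _ _).trans (Finset.sum_le_sum fun D _ => hD D)
    _ = ENNReal.ofReal (Real.exp (-r) * ∑ D ∈ 𝒟, Real.exp (-ℓ D)) := by
        rw [← ENNReal.ofReal_sum_of_nonneg fun D _ => (Real.exp_pos _).le, Finset.mul_sum]
        simp only [neg_add, Real.exp_add]

lemma measureReal_setOf_exists_describes_le [Fintype α] [MeasurableSpace α]
    [MeasurableSingletonClass α] (hι : Measurable ι) (hK : K.Nonempty)
    {𝒞 : ℕ → Finset (G → α)} {a b : ℕ} {s lam η : ℝ}
    (hcount : ∑ n ∈ Finset.Ico a b, #(𝒞 n) * Real.exp (-(s * #(F n))) +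
      Fintype.card α * Real.exp (-lam) ≤ 2 * η) :
    μ.real {x | ∃ D ∈ descriptions W 𝒞 a b, Describes F ι bad W D x ∧
      cylinderMass μ ι W (itinerary ι x) ≤
        ENNReal.ofReal (Real.exp (-(3 * η * #W + descriptionLength F s lam D))) *
          codeWeight μ ι K (W \ coveredTimes F D) (itinerary ι x)} ≤ Real.exp (-(η * #W)) := by
  refine (ENNReal.toReal_le_of_le_ofReal (by positivity)
    (measure_setOf_exists_describes_le μ hι hK _ _ _)).trans ?_
  calc _ ≤ Real.exp (-(3 * η * #W)) * Real.exp (#W * (2 * η)) := by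
        gcongr
        exact (sum_exp_neg_descriptionLength_le W 𝒞 a b).trans (by gcongr)
    _ = Real.exp (-(η * #W)) := by rw [← Real.exp_add]; ring_nf

variable [SMulInvariantMeasure G X μ]

lemma exists_describes_cylinderMass_le [Fintype α] {A : ℕ → Set X} {𝒞 : ℕ → Finset (G → α)}
    (h𝒞 : ∀ n, IsCodebook ι bad (F n) (A n) (𝒞 n)) {a b : ℕ} (hab : a ≤ b)
    (hne : ∀ n, a ≤ n → (F n).Nonempty) {C : ℝ} (hC₀ : 0 ≤ C)
    (hC : ∀ n, (#(temperedHull F n) : ℝ) ≤ C * #(F n)) {θ s h δ η γ lam M : ℝ} (hθ₀ : 0 < θ)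
    (hθ₁ : θ ≤ 1 / 2) (hs : s ≤ (h - δ) * (1 - θ)) (hδ₀ : 0 ≤ δ) (hδ₁ : δ ≤ h)
    (hγ : 18 * η * (1 / θ + C / (1 - θ)) ≤ δ * γ) (hη : 0 ≤ η)
    (hκ₀ : κ₀ ∈ K) (hM : ∀ x, information μ ι K x ≤ M)
    (hF : ∀ n, a ≤ n →
      M * ∑ κ ∈ K, (#(shiftBoundary (κ₀ * κ⁻¹)⁻¹ (F n)) : ℝ) ≤ η * #(F n))
    (hWK : M * ∑ κ ∈ K, (#(shiftBoundary (κ₀ * κ⁻¹) W) : ℝ) ≤ η * #W)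
    (hWF : ∑ f ∈ (Finset.Ico a b).biUnion F, (#(shiftBoundary f W) : ℝ) ≤ γ / 2 * #W) {x : X}
    (hx : ∀ S : Finset G, cylinderMass μ ι S (itinerary ι x) ≠ 0)
    (htyp : IsTypical μ ι K κ₀ (⋃ n ∈ Finset.Ico a b, A n) bad h η γ lam W x) :
    ∃ D ∈ descriptions W 𝒞 a b, Describes F ι bad W D x ∧ cylinderMass μ ι W (itinerary ι x) ≤
      ENNReal.ofReal (Real.exp (-(3 * η * #W + descriptionLength F s lam D))) *
        codeWeight μ ι K (W \ coveredTimes F D) (itinerary ι x) := by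
  have hM₀ : 0 ≤ M := (information_nonneg μ ι K x).trans (hM x)
  obtain ⟨sel, hsel, hsum, hcover⟩ := exists_tiles_subset_le_card_biUnion
    hθ₀ (by linarith) hC₀ hC hab hne hWF htyp.le_card_visitTimes
  obtain ⟨D, hD, hdesc, hcov, hlen⟩ := exists_describes h𝒞
    (fun p hp => ⟨(hsel p hp).1, (hsel p hp).2.1⟩) s lam
  have hUW : sel.biUnion (tile F) ⊆ W := Finset.biUnion_subset.2 fun p hp => (hsel p hp).2.2
  have hU : (#(sel.biUnion (tile F)) : ℝ) ≤ #W := by exact_mod_cast Finset.card_le_card hUW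
  refine ⟨D, hD, hdesc, ?_⟩
  rw [hcov]
  refine cylinderMass_le_of_saving (δ := δ) μ hUW hκ₀ hM ?_ ?_ ?_ hx htyp.sum_excess_le
    htyp.lt_information
  · have hhalf := mul_le_mul_of_nonneg_right (show 1 / 2 ≤ 1 - θ by linarith)
      (show (0 : ℝ) ≤ ∑ p ∈ sel, (#(F p.2) : ℝ) by positivity)
    calc _ ≤ η * (#W + ∑ p ∈ sel, (#(F p.2) : ℝ)) :=
          mul_sum_card_shiftBoundary_sdiff_tiles_le hM₀ hWK fun p hp =>
            hF p.2 (Finset.mem_Ico.1 (hsel p hp).1).1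
      _ ≤ η * (#W + 2 * #W) := by gcongr; linarith
      _ = 3 * η * #W := by ring
  · calc descriptionLength F s lam D
        ≤ (h - δ) * (1 - θ) * ∑ p ∈ sel, (#(F p.2) : ℝ) + η * #W := by
          rw [hlen]
          exact add_le_add (by gcongr) htyp.card_visitTimes_bad_le
      _ ≤ (h - δ) * #(sel.biUnion (tile F)) + η * #W := by
          rw [mul_assoc]
          gcongr
  · have hρ : 0 < 1 / θ + C / (1 - θ) :=
      add_pos_of_pos_of_nonneg (by positivity) (div_nonneg hC₀ (by linarith))
    exact mul_le_mul_of_saving hρ hδ₀ (Nat.cast_nonneg _) hγ hcover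

end Descriptions

lemma exists_notMem_of_measureReal_lt_one {Ω : Type*} [MeasurableSpace Ω] {μ : Measure Ω}
    [IsProbabilityMeasure μ] {S : Set Ω} (hS : μ.real S < 1) {p : Ω → Prop} (hp : ∀ᵐ x ∂μ, p x) :
    ∃ x, x ∉ S ∧ p x := by
  by_contra! h
  have hae : S =ᵐ[μ] univ := by
    filter_upwards [hp] with x hx
    exact eq_true (by_contra fun hxS => h x hxS hx)
  rw [measureReal_congr hae, probReal_univ] at hS
  exact lt_irrefl _ hS

section Counting

open scoped Finset

variable [Group G] [MulAction G X] [MeasurableSpace X] [MeasurableConstSMul G X]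
  {μ : Measure X} [SMulInvariantMeasure G X μ] {α : Type*} {ι : X → α}

lemma integral_excess {K : Finset G} (hK : K.Nonempty) (κ₀ : G) (h : ℝ) :
    ∫ x, excess μ ι K κ₀ h x ∂μ = (∫ x, max (information μ ι K x - h * #K) 0 ∂μ) / #K := by
  have hcard : (0 : ℝ) < #K := by exact_mod_cast hK.card_pos
  have hexcess : excess μ ι K κ₀ h =
      fun x => max (information μ ι K (κ₀⁻¹ • x) - h * #K) 0 / #K := by
    ext x
    rw [excess, ← max_div_div_right hcard.le, sub_div, mul_div_cancel_right₀ _ hcard.ne', zero_div]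
  rw [hexcess, integral_div, integral_comp_smul fun x => max (information μ ι K x - h * #K) 0]

variable [IsProbabilityMeasure μ] [Finite α] [MeasurableSpace α] [MeasurableSingletonClass α]

lemma memLp_excess (hι : Measurable ι) (K : Finset G) (κ₀ : G) (h : ℝ) :
    MemLp (excess μ ι K κ₀ h) 2 μ := by
  have hmean : MemLp (fun x => information μ ι K (κ₀⁻¹ • x) / #K) 2 μ := by
    simpa only [div_eq_inv_mul, Function.comp_apply] using
      ((memLp_information μ hι K 2).comp_measurePreserving
        (measurePreserving_smul κ₀⁻¹ μ)).const_mul (#K : ℝ)⁻¹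
  exact (hmean.sub (memLp_const h)).pos_part

variable [Countable G] {F : ℕ → Finset G} {h : ℝ}

lemma tendsto_measureReal_mul_card_lt_card_visitTimes (herg : IsErgodicGAction G μ)
    (hF : IsFolnerSeq F) {E : Set X} (hE : MeasurableSet E) {β : ℝ} (hβ : μ.real E < β) :
    Tendsto (fun n => μ.real {x | β * #(F n) < #(visitTimes (F n) E x)}) atTop (𝓝 0) := by
  have hmem : MemLp (E.indicator (1 : X → ℝ)) 2 μ :=
    memLp_indicator_const 2 hE 1 (Or.inr (measure_ne_top μ E))
  simp only [card_visitTimes]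
  refine tendsto_measureReal_mul_card_lt_sum_smul herg hF hmem ?_
  rwa [integral_indicator_one hE]

lemma tendsto_measureReal_card_visitTimes_lt_mul_card (herg : IsErgodicGAction G μ)
    (hF : IsFolnerSeq F) {E : Set X} (hE : MeasurableSet E) {γ : ℝ} (hγ : γ < μ.real E) :
    Tendsto (fun n => μ.real {x | #(visitTimes (F n) E x) < γ * #(F n)}) atTop (𝓝 0) := by
  have hmem : MemLp (E.indicator (1 : X → ℝ)) 2 μ :=
    memLp_indicator_const 2 hE 1 (Or.inr (measure_ne_top μ E))
  have hint : ∫ x, (-E.indicator 1) x ∂μ < -γ := by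
    simpa only [Pi.neg_apply, integral_neg, neg_lt_neg_iff, integral_indicator_one hE] using hγ
  simpa only [Pi.neg_apply, Finset.sum_neg_distrib, neg_mul, neg_lt_neg_iff, card_visitTimes]
    using tendsto_measureReal_mul_card_lt_sum_smul herg hF hmem.neg hint

lemma tendsto_measureReal_not_isTypical (herg : IsErgodicGAction G μ) (hι : Measurable ι)
    (hF : IsFolnerSeq F) (hGrow : GrowthCond F) (hh : 0 ≤ h)
    (hent : ∀ η > 0, ∃ᶠ n in atTop, ∫ x, information μ ι (F n) x ∂μ ≤ (h + η) * #(F n))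
    (hent' : ∀ η > 0, ∀ᶠ n in atTop, (h - η) * #(F n) ≤ ∫ x, information μ ι (F n) x ∂μ)
    {K : Finset G} {κ₀ : G} {E bad : Set X} (hE : MeasurableSet E) (hbad : MeasurableSet bad)
    {η γ lam : ℝ} (hη : 0 < η) (hlam : 0 < lam) (hγ : γ < μ.real E) (hμbad : μ.real bad < η / lam)
    (hexcess : ∫ x, excess μ ι K κ₀ h x ∂μ < η) :
    Tendsto (fun n => μ.real {x | ¬ IsTypical μ ι K κ₀ E bad h η γ lam (F n) x}) atTop (𝓝 0) := by
  have hlim := ((tendsto_measureReal_card_visitTimes_lt_mul_card herg hF hE hγ).add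
    (tendsto_measureReal_mul_card_lt_card_visitTimes herg hF hbad hμbad)).add
    ((tendsto_measureReal_mul_card_lt_sum_smul herg hF (memLp_excess hι K κ₀ h) hexcess).add
      (tendsto_measureReal_information_le herg hι hF hGrow hh hent hent' hη))
  simp only [add_zero] at hlim
  refine squeeze_zero (fun _ => measureReal_nonneg) (fun n => ?_) hlim
  refine le_trans (measureReal_mono fun x hx => ?_) ((measureReal_union_le _ _).trans
    (add_le_add (measureReal_union_le _ _) (measureReal_union_le _ _)))
  by_contra hgood
  simp only [mem_union, mem_ofPred_eq, not_or, not_lt, not_le] at hgood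
  obtain ⟨⟨hvisit, hvbad⟩, hsum, hinfo⟩ := hgood
  refine hx ⟨hvisit, ?_, hsum, hinfo⟩
  calc lam * #(visitTimes (F n) bad x) ≤ lam * (η / lam * #(F n)) := by gcongr
    _ = η * #(F n) := by field_simp

/-- If the tiles saved more than the errors cost, typical points would be exceptional. -/
lemma mul_lt_of_forall_isCodebook [Fintype α] [DecidableEq G] (herg : IsErgodicGAction G μ)
    (hι : Measurable ι) (hF : IsFolnerSeq F) (hGrow : GrowthCond F)
    (hent : ∀ η > 0, ∃ᶠ n in atTop, ∫ x, information μ ι (F n) x ∂μ ≤ (h + η) * #(F n))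
    (hent' : ∀ η > 0, ∀ᶠ n in atTop, (h - η) * #(F n) ≤ ∫ x, information μ ι (F n) x ∂μ)
    {bad : Set X} {A : ℕ → Set X} {𝒞 : ℕ → Finset (G → α)} (hbad : MeasurableSet bad)
    (hA : ∀ n, MeasurableSet (A n)) (h𝒞 : ∀ n, IsCodebook ι bad (F n) (A n) (𝒞 n)) {a b : ℕ}
    (hab : a ≤ b) (hne : ∀ n, a ≤ n → (F n).Nonempty) {C : ℝ} (hC₀ : 0 ≤ C)
    (hC : ∀ n, (#(temperedHull F n) : ℝ) ≤ C * #(F n)) {θ s δ η γ lam M : ℝ} (hθ₀ : 0 < θ)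
    (hθ₁ : θ ≤ 1 / 2) (hs : s ≤ (h - δ) * (1 - θ)) (hδ₀ : 0 ≤ δ) (hδ₁ : δ ≤ h) (hη : 0 < η)
    {K : Finset G} {κ₀ : G} (hκ₀ : κ₀ ∈ K) (hM : ∀ x, information μ ι K x ≤ M)
    (hexcess : ∫ x, excess μ ι K κ₀ h x ∂μ < η)
    (hFK : ∀ n, a ≤ n →
      M * ∑ κ ∈ K, (#(shiftBoundary (κ₀ * κ⁻¹)⁻¹ (F n)) : ℝ) ≤ η * #(F n))
    (hcount : ∑ n ∈ Finset.Ico a b, #(𝒞 n) * Real.exp (-(s * #(F n))) +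
      Fintype.card α * Real.exp (-lam) ≤ 2 * η) (hlam : 0 < lam) (hμbad : μ.real bad < η / lam)
    (hγ₀ : 0 < γ) (hγ : γ < μ.real (⋃ n ∈ Finset.Ico a b, A n)) :
    δ * γ < 18 * η * (1 / θ + C / (1 - θ)) := by
  by_contra! hsave
  have hlim := (tendsto_measureReal_not_isTypical (K := K) (κ₀ := κ₀) herg hι hF hGrow
    (hδ₀.trans hδ₁) hent hent' (Finset.measurableSet_biUnion _ fun n _ => hA n) hbad hη hlam hγ
    hμbad hexcess).add (tendsto_exp_neg_mul_card hGrow hη)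
  rw [add_zero] at hlim
  obtain ⟨N, hN, hWK, hWF⟩ := ((hlim.eventually_lt_const one_pos).and
    ((eventually_sum_card_shiftBoundary_le hF hGrow K (fun κ => κ₀ * κ⁻¹) M hη).and
    (eventually_sum_card_shiftBoundary_le hF hGrow ((Finset.Ico a b).biUnion F) id 1
      (half_pos hγ₀)))).exists
  rw [one_mul] at hWF
  obtain ⟨x, hxN, hx⟩ := exists_notMem_of_measureReal_lt_one
    (((measureReal_union_le _ _).trans (add_le_add le_rfl
      (measureReal_setOf_exists_describes_le (bad := bad) (W := F N) μ hι ⟨κ₀, hκ₀⟩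
        hcount))).trans_lt hN)
    (ae_cylinderMass_itinerary_ne_zero (G := G) μ ι)
  simp only [mem_union, mem_ofPred_eq, not_or, not_not] at hxN
  exact hxN.2 (exists_describes_cylinderMass_le μ h𝒞 hab hne hC₀ hC hθ₀ hθ₁ hs hδ₀ hδ₁ hsave hη.le
    hκ₀ hM hFK hWK hWF hx hxN.1)

end Counting

section RateComparison

open scoped Finset

section Scales

variable {F : ℕ → Finset G}

lemma summable_exp_neg_mul_card (hGrow : GrowthCond F) {c : ℝ} (hc : 0 < c) :
    Summable fun n => Real.exp (-(c * #(F n))) := by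
  refine Summable.of_norm_bounded_eventually_nat (g := fun n : ℕ => 1 / (n : ℝ) ^ 2)
    (Real.summable_one_div_nat_pow.2 one_lt_two) ?_
  filter_upwards [eventually_mul_log_le_card hGrow (2 / c), eventually_gt_atTop 0] with n hn hn₀
  have hn₀' : (0 : ℝ) < n := by exact_mod_cast hn₀
  rw [div_mul_eq_mul_div, div_le_iff₀' hc] at hn
  rw [Real.norm_of_nonneg (Real.exp_pos _).le, one_div, ← Real.exp_log (pow_pos hn₀' 2),
    ← Real.exp_neg, Real.log_pow, Nat.cast_ofNat]
  exact Real.exp_le_exp.2 (neg_le_neg hn)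

lemma eventually_forall_sum_exp_neg_mul_card_le (hGrow : GrowthCond F) {c η : ℝ} (hc : 0 < c)
    (hη : 0 < η) :
    ∀ᶠ a in atTop, ∀ b, ∑ n ∈ Finset.Ico a b, Real.exp (-(c * #(F n))) ≤ η := by
  have hsum := summable_exp_neg_mul_card hGrow hc
  filter_upwards [(tendsto_sum_nat_add fun n => Real.exp (-(c * #(F n)))).eventually_lt_const hη]
    with a ha b
  simp only [Finset.sum_Ico_eq_sum_range, add_comm a]
  exact (((summable_nat_add_iff a).2 hsum).sum_le_tsum _ fun _ _ => (Real.exp_pos _).le).trans ha.le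

end Scales

lemma exists_lt_measureReal_biUnion_Ico [MeasurableSpace X] {μ : Measure X} [IsFiniteMeasure μ]
    {E : Set X} {A : ℕ → Set X} (hEA : ∀ x ∈ E, ∃ᶠ n in atTop, x ∈ A n) {γ : ℝ}
    (hγ : γ < μ.real E) (a : ℕ) :
    ∃ b, a ≤ b ∧ γ < μ.real (⋃ n ∈ Finset.Ico a b, A n) := by
  have hmono : Monotone fun b => ⋃ n ∈ Finset.Ico a b, A n := fun b b' hbb' =>
    biUnion_subset_biUnion_left fun n hn => Finset.Ico_subset_Ico_right hbb' hn
  have hcover : E ⊆ ⋃ b, ⋃ n ∈ Finset.Ico a b, A n := fun x hx => by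
    obtain ⟨n, han, hn⟩ := frequently_atTop.1 (hEA x hx) a
    exact mem_iUnion.2 ⟨n + 1, mem_biUnion (Finset.mem_Ico.2 ⟨han, n.lt_succ_self⟩) hn⟩
  have hlim := (ENNReal.tendsto_toReal (measure_ne_top μ _)).comp
    (tendsto_measure_iUnion_atTop (μ := μ) hmono)
  obtain ⟨b, hb, hab⟩ := ((hlim.eventually_const_lt (hγ.trans_le (measureReal_mono hcover))).and
    (eventually_ge_atTop a)).exists
  exact ⟨b, hab, hb⟩

lemma exists_pos_mul_exp_neg_le (c : ℝ) {η : ℝ} (hη : 0 < η) :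
    ∃ lam > 0, c * Real.exp (-lam) ≤ η := by
  have hlim := Real.tendsto_exp_neg_atTop_nhds_zero.const_mul c
  rw [mul_zero] at hlim
  obtain ⟨lam, hle, hlam⟩ := ((hlim.eventually_le_const hη).and (eventually_gt_atTop 0)).exists
  exact ⟨lam, hlam, hle⟩

lemma sum_card_mul_exp_neg_le {β : Type*} {F : ℕ → Finset G} {𝒞 : ℕ → Finset β} {s ε : ℝ}
    (h𝒞 : ∀ n, (#(𝒞 n) : ℝ) ≤ Real.exp (s * #(F n))) (J : Finset ℕ) :
    ∑ n ∈ J, #(𝒞 n) * Real.exp (-((s + ε) * #(F n))) ≤ ∑ n ∈ J, Real.exp (-(ε * #(F n))) := by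
  refine Finset.sum_le_sum fun n _ => ?_
  calc #(𝒞 n) * Real.exp (-((s + ε) * #(F n)))
      ≤ Real.exp (s * #(F n)) * Real.exp (-((s + ε) * #(F n))) := by gcongr; exact h𝒞 n
    _ = Real.exp (-(ε * #(F n))) := by rw [← Real.exp_add]; ring_nf

lemma exists_slack {r h : ℝ} (hr : 0 ≤ r) (hrh : r < h) :
    ∃ ε θ : ℝ, 0 < ε ∧ 2 * ε ≤ h ∧ 0 < θ ∧ θ ≤ 1 / 2 ∧ r + ε ≤ (h - 2 * ε) * (1 - θ) := by
  obtain ⟨ε, hε⟩ : ∃ ε, ε = (h - r) / 4 := ⟨_, rfl⟩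
  have hh : 0 < h := hr.trans_lt hrh
  have hε₀ : 0 < ε := by linarith
  have hθh : ε / h * h = ε := div_mul_cancel₀ ε hh.ne'
  have hθ₀ : 0 < ε / h := div_pos hε₀ hh
  refine ⟨ε, ε / h, hε₀, by linarith, hθ₀, (div_le_iff₀ hh).2 (by linarith), ?_⟩
  linarith [mul_pos hε₀ hθ₀]

variable [Group G] [MulAction G X] [MeasurableSpace X] [MeasurableConstSMul G X]
  {μ : Measure X} [SMulInvariantMeasure G X μ] {α : Type*} {ι : X → α}
  [Countable G] [IsProbabilityMeasure μ] [Finite α] [MeasurableSpace α]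
  [MeasurableSingletonClass α] {F : ℕ → Finset G} {h : ℝ}

lemma exists_integral_excess_lt (herg : IsErgodicGAction G μ) (hι : Measurable ι)
    (hF : IsFolnerSeq F) (hGrow : GrowthCond F) (hh : 0 ≤ h)
    (hent : ∀ η > 0, ∃ᶠ n in atTop, ∫ x, information μ ι (F n) x ∂μ ≤ (h + η) * #(F n)) {η : ℝ}
    (hη : 0 < η) :
    ∃ (K : Finset G) (κ₀ : G), κ₀ ∈ K ∧ ∫ x, excess μ ι K κ₀ h x ∂μ < η := by
  obtain ⟨m, hm, hmpos⟩ := ((eventually_integral_max_information_sub_le herg hι hF hGrow hh hent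
    (half_pos hη)).and ((tendsto_card_atTop hGrow).eventually_gt_atTop 0)).exists
  obtain ⟨κ₀, hκ₀⟩ := Finset.card_pos.1 (Nat.cast_pos.1 hmpos)
  refine ⟨F m, κ₀, hκ₀, ?_⟩
  rw [integral_excess ⟨κ₀, hκ₀⟩]
  exact ((div_le_iff₀ hmpos).2 hm).trans_lt (half_lt_self hη)

theorem le_of_forall_exists_isCodebook (herg : IsErgodicGAction G μ) (hι : Measurable ι)
    (hF : IsFolnerSeq F) (hT : IsTemperedSeq F) (hGrow : GrowthCond F)
    (hent : ∀ η > 0, ∃ᶠ n in atTop, ∫ x, information μ ι (F n) x ∂μ ≤ (h + η) * #(F n))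
    (hent' : ∀ η > 0, ∀ᶠ n in atTop, (h - η) * #(F n) ≤ ∫ x, information μ ι (F n) x ∂μ)
    {E : Set X} (hE : 0 < μ.real E) {r : ℝ} (hr : 0 ≤ r)
    (hcode : ∀ b > 0, ∃ bad, MeasurableSet bad ∧ μ.real bad < b ∧
      ∃ (A : ℕ → Set X) (𝒞 : ℕ → Finset (G → α)), (∀ n, MeasurableSet (A n)) ∧
        (∀ n, IsCodebook ι bad (F n) (A n) (𝒞 n)) ∧
        (∀ n, (#(𝒞 n) : ℝ) ≤ Real.exp (r * #(F n))) ∧ ∀ x ∈ E, ∃ᶠ n in atTop, x ∈ A n) :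
    h ≤ r := by
  classical
  cases nonempty_fintype α
  by_contra! hrh
  have hh : 0 < h := hr.trans_lt hrh
  obtain ⟨C, hC₀, hC⟩ := hT.exists_card_temperedHull_le
  obtain ⟨ε, θ, hε, hεh, hθ, hθ₁, hs⟩ := exists_slack hr hrh
  set ρ := 1 / θ + C / (1 - θ)
  have hρ : 0 < ρ := add_pos (by positivity) (div_pos hC₀ (by linarith))
  set η := 2 * ε * (μ.real E / 2) / (18 * ρ)
  have hη : 0 < η := by positivity
  have hηρ : 18 * η * ρ = 2 * ε * (μ.real E / 2) := by simp only [η]; field_simp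
  obtain ⟨K, κ₀, hκ₀, hexcess⟩ := exists_integral_excess_lt herg hι hF hGrow hh.le hent hη
  obtain ⟨M, hM⟩ := exists_forall_information_le μ ι K
  obtain ⟨lam, hlam, hcost⟩ := exists_pos_mul_exp_neg_le (Fintype.card α) hη
  obtain ⟨bad, hbad, hμbad, A, 𝒞, hA, h𝒞, hcard, hEA⟩ := hcode (η / lam) (by positivity)
  obtain ⟨a, ha⟩ := eventually_atTop.1 (((tendsto_card_atTop hGrow).eventually_gt_atTop 0).and
    ((eventually_sum_card_shiftBoundary_le hF hGrow K (fun κ => (κ₀ * κ⁻¹)⁻¹) M hη).and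
      (eventually_forall_sum_exp_neg_mul_card_le hGrow hε hη)))
  obtain ⟨b, hab, hb⟩ := exists_lt_measureReal_biUnion_Ico hEA (half_lt_self hE) a
  have hcount : ∑ n ∈ Finset.Ico a b, #(𝒞 n) * Real.exp (-((r + ε) * #(F n))) +
      Fintype.card α * Real.exp (-lam) ≤ 2 * η := by
    linarith [sum_card_mul_exp_neg_le (ε := ε) hcard (Finset.Ico a b), (ha a le_rfl).2.2 b]
  have hlt := mul_lt_of_forall_isCodebook herg hι hF hGrow hent hent' hbad hA h𝒞 hab
    (fun n hn => Finset.card_pos.1 (Nat.cast_pos.1 (ha n hn).1)) hC₀.le hC hθ hθ₁ hs (by positivity)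
    hεh hη hκ₀ hM hexcess (fun n hn => (ha n hn).2.1) hcount hlam hμbad (half_pos hE) hb
  exact hlt.ne' hηρ

end RateComparison

/-! ### Partitions and local entropy -/

section Partition

open scoped Finset

variable [MeasurableSpace X]

lemma IsMeasPartition.exists_measurable_label {k : ℕ} {P : Fin k → Set X}
    (hP : IsMeasPartition P) : ∃ ι : X → Fin k, Measurable ι ∧ ∀ i, P i = ι ⁻¹' {i} := by
  obtain ⟨hmeas, hdisj, hunion⟩ := hP
  choose ι hι using fun x => mem_iUnion.1 (hunion.symm ▸ mem_univ x)
  have hPι (i : Fin k) : P i = ι ⁻¹' {i} := by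
    ext x
    refine ⟨fun hx => by_contra fun hne => disjoint_left.1 (hdisj hne) (hι x) hx, ?_⟩
    rintro rfl
    exact hι x
  exact ⟨ι, measurable_to_countable' fun i => hPι i ▸ hmeas i, hPι⟩

variable [Group G] [MulAction G X] [MeasurableConstSMul G X] {μ : Measure X}
  [IsProbabilityMeasure μ] {F : ℕ → Finset G} {k : ℕ} {P : Fin k → Set X} {ι : X → Fin k}

lemma partH_eq_integral_information (hι : Measurable ι) (hP : ∀ i, P i = ι ⁻¹' {i})
    (S : Finset G) : partH μ P S = ∫ x, information μ ι S x ∂μ := by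
  let _ := Classical.decEq G
  rw [integral_information_eq_sum μ hι S, partH]
  refine Finset.sum_congr rfl fun u _ => ?_
  congr 3
  ext x
  simp [hP, itinerary, funext_iff]

lemma partH_nonneg (hι : Measurable ι) (hP : ∀ i, P i = ι ⁻¹' {i}) (S : Finset G) :
    0 ≤ partH μ P S := by
  rw [partH_eq_integral_information hι hP]
  exact integral_nonneg (information_nonneg μ ι S)

lemma partH_le (hι : Measurable ι) (hP : ∀ i, P i = ι ⁻¹' {i}) (S : Finset G) :
    partH μ P S ≤ #S * Real.log k + 1 := by
  rw [partH_eq_integral_information hι hP]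
  simpa using setIntegral_information_le μ hι S univ

lemma frequently_partH_le (hι : Measurable ι) (hP : ∀ i, P i = ι ⁻¹' {i}) (hGrow : GrowthCond F)
    {η : ℝ} (hη : 0 < η) :
    ∃ᶠ n in atTop, partH μ P (F n) ≤ (partEnt μ F P + η) * #(F n) := by
  have hbdd : IsBoundedUnder (· ≤ ·) atTop fun n => partH μ P (F n) / #(F n) := by
    refine isBoundedUnder_of_eventually_le (a := Real.log k + 1) ?_
    filter_upwards [(tendsto_card_atTop hGrow).eventually_ge_atTop 1] with n hn
    rw [div_le_iff₀ (zero_lt_one.trans_le hn)]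
    linarith [partH_le (μ := μ) hι hP (F n)]
  refine ((frequently_lt_of_liminf_lt hbdd.isCoboundedUnder_ge
    (lt_add_of_pos_right (partEnt μ F P) hη)).and_eventually
    ((tendsto_card_atTop hGrow).eventually_gt_atTop 0)).mono fun n ⟨hn, hpos⟩ => ?_
  exact ((div_lt_iff₀ hpos).1 hn).le

lemma eventually_le_partH (hι : Measurable ι) (hP : ∀ i, P i = ι ⁻¹' {i}) (hGrow : GrowthCond F)
    {η : ℝ} (hη : 0 < η) :
    ∀ᶠ n in atTop, (partEnt μ F P - η) * #(F n) ≤ partH μ P (F n) := by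
  have hbdd : IsBoundedUnder (· ≥ ·) atTop fun n => partH μ P (F n) / #(F n) :=
    isBoundedUnder_of ⟨0, fun n => div_nonneg (partH_nonneg hι hP _) (Nat.cast_nonneg _)⟩
  filter_upwards [eventually_lt_of_lt_liminf (sub_lt_self (partEnt μ F P) hη) hbdd,
    (tendsto_card_atTop hGrow).eventually_gt_atTop 0] with n hn hpos
  exact ((lt_div_iff₀ hpos).1 hn).le

end Partition

section LocalEntropy

open scoped Finset

variable [Group G] [MetricSpace X] [MulAction G X] [MeasurableSpace X] {μ : Measure X}
  [IsProbabilityMeasure μ]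

lemma frequently_le_measure_bowenBall {F : ℕ → Finset G} (hGrow : GrowthCond F) {r δ : ℝ}
    {x : X} (hx : lowLoc μ F x δ < ENNReal.ofReal r) :
    ∃ᶠ n in atTop, ENNReal.ofReal (Real.exp (-(r * #(F n)))) ≤ μ (bowenBall (F n) x δ) := by
  refine ((frequently_lt_of_liminf_lt (by isBoundedDefault) hx).and_eventually
    ((tendsto_card_atTop hGrow).eventually_gt_atTop 0)).mono fun n ⟨hn, hpos⟩ => ?_
  rw [locTerm] at hn
  split_ifs at hn with hμ
  · exact absurd hn not_top_lt
  have hμpos : 0 < μ.real (bowenBall (F n) x δ) := ENNReal.toReal_pos hμ (measure_ne_top _ _)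
  have hlog := (div_lt_iff₀ hpos).1 (ENNReal.ofReal_lt_ofReal_iff'.1 hn).1
  rw [← ENNReal.ofReal_toReal (measure_ne_top μ (bowenBall (F n) x δ))]
  refine ENNReal.ofReal_le_ofReal ((Real.le_log_iff_exp_le hμpos).1 ?_)
  rw [measureReal_def]
  linarith

variable [ContinuousConstSMul G X] [BorelSpace X]

lemma exists_forall_isCodebook_of_lowLoc_lt {α : Type*} [Finite α] [MeasurableSpace α]
    [MeasurableSingletonClass α] {ι : X → α} (hι : Measurable ι) {F : ℕ → Finset G}
    (hGrow : GrowthCond F) {E : Set X} {r : ℝ}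
    (hE : ∀ x ∈ E, ∀ δ > 0, lowLoc μ F x δ < ENNReal.ofReal r) {b : ℝ} (hb : 0 < b) :
    ∃ bad, MeasurableSet bad ∧ μ.real bad < b ∧
      ∃ (A : ℕ → Set X) (𝒞 : ℕ → Finset (G → α)), (∀ n, MeasurableSet (A n)) ∧
        (∀ n, IsCodebook ι bad (F n) (A n) (𝒞 n)) ∧
        (∀ n, (#(𝒞 n) : ℝ) ≤ Real.exp (r * #(F n))) ∧ ∀ x ∈ E, ∃ᶠ n in atTop, x ∈ A n := by
  obtain ⟨bad, hbad, hμbad, δ, hδ, hdecode⟩ := exists_forall_exists_decode μ hι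
    (ENNReal.ofReal_pos.2 (half_pos hb)).ne'
  have hsize (n : ℕ) : ENNReal.ofReal (Real.exp (-(r * #(F n)))) ≠ 0 :=
    (ENNReal.ofReal_pos.2 (Real.exp_pos _)).ne'
  choose 𝒞 A hcard hA hball h𝒞 using fun n => exists_isCodebook_bowenBall μ
    ((add_halves δ).symm ▸ hdecode) (half_pos hδ) (F n) (hsize n)
  refine ⟨bad, hbad, (ENNReal.toReal_le_of_le_ofReal (half_pos hb).le hμbad).trans_lt
    (half_lt_self hb), A, 𝒞, fun n => (hA n).measurableSet, h𝒞, fun n => ?_, fun x hx =>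
    (frequently_le_measure_bowenBall hGrow (hE x hx _ (half_pos hδ))).mono fun n hn => hball n hn⟩
  have hmul := ENNReal.toReal_mono one_ne_top ((hcard n).trans_eq measure_univ)
  rw [ENNReal.toReal_mul, ENNReal.toReal_natCast, ENNReal.toReal_ofReal (Real.exp_pos _).le,
    ENNReal.toReal_one, Real.exp_neg] at hmul
  exact (mul_inv_le_iff₀ (Real.exp_pos _)).1 hmul |>.trans_eq (one_mul _)

variable [Countable G] [SMulInvariantMeasure G X μ] {F : ℕ → Finset G}

lemma ae_ofReal_le_iSup_lowLoc (herg : IsErgodicGAction G μ) (hFol : IsFolnerSeq F)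
    (hTemp : IsTemperedSeq F) (hGrow : GrowthCond F) {k : ℕ} {P : Fin k → Set X}
    (hP : IsMeasPartition P) {r : ℝ} (hr : 0 ≤ r) (hlt : r < partEnt μ F P) :
    ∀ᵐ x ∂μ, ENNReal.ofReal r ≤ ⨆ (δ : ℝ) (_ : 0 < δ), lowLoc μ F x δ := by
  obtain ⟨ι, hι, hPι⟩ := hP.exists_measurable_label
  rw [ae_iff]
  by_contra hE
  have hlow : ∀ x ∈ {x | ¬ ENNReal.ofReal r ≤ ⨆ (δ : ℝ) (_ : 0 < δ), lowLoc μ F x δ}, ∀ δ > 0,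
      lowLoc μ F x δ < ENNReal.ofReal r := fun x hx δ hδ =>
    (le_iSup₂ (f := fun (δ : ℝ) (_ : 0 < δ) => lowLoc μ F x δ) δ hδ).trans_lt (not_le.1 hx)
  refine hlt.not_ge (le_of_forall_exists_isCodebook herg hι hFol hTemp hGrow ?_ ?_
    (ENNReal.toReal_pos hE (measure_ne_top _ _)) hr
    fun b => exists_forall_isCodebook_of_lowLoc_lt hι hGrow hlow)
  · simpa only [partH_eq_integral_information hι hPι] using
      fun η => frequently_partH_le (μ := μ) hι hPι hGrow (η := η)
  · simpa only [partH_eq_integral_information hι hPι] using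
      fun η => eventually_le_partH (μ := μ) hι hPι hGrow (η := η)

end LocalEntropy

theorem brin_katok_lower_general [Group G] [Countable G] [MetricSpace X] [MulAction G X]
    [ContinuousConstSMul G X] [MeasurableSpace X] [BorelSpace X] (μ : Measure X)
    [IsProbabilityMeasure μ] [SMulInvariantMeasure G X μ] (herg : IsErgodicGAction G μ)
    (F : ℕ → Finset G) (hFol : IsFolnerSeq F) (hTemp : IsTemperedSeq F) (hGrow : GrowthCond F) :
    ∀ᵐ x ∂μ, measEnt μ F ≤ ⨆ (δ : ℝ) (_ : 0 < δ), lowLoc μ F x δ := by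
  have hrat : ∀ᵐ x ∂μ, ∀ q : ℚ, 0 ≤ q → ENNReal.ofReal q < measEnt μ F →
      ENNReal.ofReal q ≤ ⨆ (δ : ℝ) (_ : 0 < δ), lowLoc μ F x δ := by
    simp only [ae_all_iff, eventually_imp_distrib_left]
    intro q hq hlt
    simp only [measEnt, lt_iSup_iff] at hlt
    obtain ⟨k, P, hP, hqP⟩ := hlt
    exact ae_ofReal_le_iSup_lowLoc herg hFol hTemp hGrow hP (Rat.cast_nonneg.2 hq)
      (ENNReal.ofReal_lt_ofReal_iff'.1 hqP).1
  filter_upwards [hrat] with x hx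
  refine le_of_forall_lt fun c hc => ?_
  obtain ⟨q, hq, hcq, hqh⟩ := ENNReal.lt_iff_exists_rat_btwn.1 hc
  exact hcq.trans_le (hx q hq hqh)

/-- lower bound in the Brin–Katok formula. For a `G`-invariant ergodic
Borel probability measure `μ` and a tempered Følner sequence `{F_n}` with
`lim_n |F_n|/log n = ∞`, for `μ`-a.e. `x`,
`lim_{δ→0} liminf_n -(1/|F_n|) log μ(B_{F_n}(x,δ)) ≥ h_μ(X,G)`. -/
theorem brin_katok_lower
    [Group G] [Countable G] [MetricSpace X] [CompactSpace X]
    [MulAction G X] [ContinuousConstSMul G X] [MeasurableSpace X] [BorelSpace X]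
    (μ : Measure X) [IsProbabilityMeasure μ] [SMulInvariantMeasure G X μ]
    (herg : IsErgodicGAction G μ)
    (F : ℕ → Finset G) (hFol : IsFolnerSeq F) (hTemp : IsTemperedSeq F)
    (hGrow : GrowthCond F) :
    ∀ᵐ x ∂μ, measEnt μ F ≤ ⨆ (δ : ℝ) (_ : 0 < δ), lowLoc μ F x δ :=
  brin_katok_lower_general μ herg F hFol hTemp hGrow
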